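/- Let (X,f) be a TDS with f positively expansive, and φ, ψ ∈ C(X,ℝ) with ψ > 0. Then the set M_{ψ,φ}(X,f) of equilibrium measures for ψ and φ (i.e., invariant μ with (h_μ(f) + ∫φ dμ)/∫ψ dμ = P_ψ(φ)) is non-empty and compact in the weak-* topology. -/

import Mathlib

open MeasureTheory Filter Topology Set

variable {X : Type*}

/-- Birkhoff sum `S_n φ (x) = ∑_{i<n} φ(f^i x)`. -/
noncomputable def birkhoff (f : X → X) (φ : X → ℝ) (n : ℕ) (x : X) : ℝ :=
  ∑ i ∈ Finset.range n, φ (f^[i] x)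

/-- The `n`-th Bowen metric. -/
noncomputable def dynDist [MetricSpace X] (f : X → X) (n : ℕ) (x y : X) : ℝ :=
  ⨆ i : Fin n, dist (f^[(i : ℕ)] x) (f^[(i : ℕ)] y)

/-- `F` is an `(n,ε)`-spanning set of `Z`. -/
def IsSpanningSet [MetricSpace X] (f : X → X) (n : ℕ) (ε : ℝ) (Z : Set X) (F : Finset X) : Prop :=
  ∀ y ∈ Z, ∃ x ∈ F, dynDist f n x y ≤ ε

/-- `E` is `(n,ε)`-separated. -/
def IsSeparatedSet [MetricSpace X] (f : X → X) (n : ℕ) (ε : ℝ) (E : Finset X) : Prop :=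
  ∀ x ∈ E, ∀ y ∈ E, x ≠ y → ε < dynDist f n x y

/-- `S_T = {n : ∃ x, S_n ψ(x) ≤ T < S_{n+1} ψ(x)}`. -/
def STset (f : X → X) (ψ : X → ℝ) (T : ℝ) : Set ℕ :=
  {n | ∃ x : X, birkhoff f ψ n x ≤ T ∧ T < birkhoff f ψ (n + 1) x}

/-- `X_n = {x : S_n ψ(x) ≤ T < S_{n+1} ψ(x)}`. -/
def Xset (f : X → X) (ψ : X → ℝ) (T : ℝ) (n : ℕ) : Set X :=
  {x | birkhoff f ψ n x ≤ T ∧ T < birkhoff f ψ (n + 1) x}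

/-- `Q_{ψ,T}(f,φ,ε)`, the spanning-set quantity. -/
noncomputable def Qspan [MetricSpace X] (f : X → X) (φ ψ : X → ℝ) (T ε : ℝ) : ℝ :=
  sInf { r : ℝ | ∃ F : ℕ → Finset X,
    (∀ n ∈ STset f ψ T, IsSpanningSet f n ε (Xset f ψ T n) (F n)) ∧
    r = ∑' n : ℕ, Set.indicator (STset f ψ T)
        (fun n => ∑ x ∈ F n, Real.exp (birkhoff f φ n x)) n }

/-- `P_{ψ,T}(f,φ,ε)`, the separated-set quantity. -/
noncomputable def Psep [MetricSpace X] (f : X → X) (φ ψ : X → ℝ) (T ε : ℝ) : ℝ :=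
  sSup { r : ℝ | ∃ E : ℕ → Finset X,
    (∀ n ∈ STset f ψ T, (E n : Set X) ⊆ Xset f ψ T n ∧ IsSeparatedSet f n ε (E n)) ∧
    r = ∑' n : ℕ, Set.indicator (STset f ψ T)
        (fun n => ∑ x ∈ E n, Real.exp (birkhoff f φ n x)) n }

/-- The `ψ`-induced topological pressure of `φ`. -/
noncomputable def inducedPressure [MetricSpace X] (f : X → X) (φ ψ : X → ℝ) : EReal :=
  ⨆ (ε : ℝ) (_ : 0 < ε),
    Filter.limsup (fun T : ℝ => ((T⁻¹ * Real.log (Qspan f φ ψ T ε) : ℝ) : EReal)) atTop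

/-- Largest sum over `(n,ε)`-separated sets of `X`. -/
noncomputable def sepSum [MetricSpace X] (f : X → X) (φ : X → ℝ) (n : ℕ) (ε : ℝ) : ℝ :=
  sSup { r : ℝ | ∃ E : Finset X, IsSeparatedSet f n ε E ∧
    r = ∑ x ∈ E, Real.exp (birkhoff f φ n x) }

/-- The classical (Walters) topological pressure. -/
noncomputable def topPressure [MetricSpace X] (f : X → X) (φ : X → ℝ) : EReal :=
  ⨆ (ε : ℝ) (_ : 0 < ε),
    Filter.limsup (fun n : ℕ => (((n : ℝ)⁻¹ * Real.log (sepSum f φ n ε) : ℝ) : EReal)) atTop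
/-- The cell of the dynamical refinement `⋁_{i<n} f^{-i} P` indexed by itinerary `w`. -/
noncomputable def cellOf (f : X → X) {k n : ℕ} (P : Fin k → Set X) (w : Fin n → Fin k) : Set X :=
  ⋂ i : Fin n, f^[(i : ℕ)] ⁻¹' P (w i)

/-- `P` is a finite measurable partition of `X`. -/
def IsMeasPartition [MeasurableSpace X] {k : ℕ} (P : Fin k → Set X) : Prop :=
  (∀ i, MeasurableSet (P i)) ∧ Pairwise (Function.onFun Disjoint P) ∧ (⋃ i, P i) = Set.univ

/-- Entropy `H(⋁_{i<n} f^{-i} P)` of the `n`-th dynamical refinement. -/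
noncomputable def partitionEntropy [MeasurableSpace X] (μ : Measure X) (f : X → X)
    {k : ℕ} (P : Fin k → Set X) (n : ℕ) : ℝ :=
  ∑ w : Fin n → Fin k, Real.negMulLog (μ (cellOf f P w)).toReal

/-- Kolmogorov–Sinai (measure-theoretic) entropy `h_μ(f)`. -/
noncomputable def ksEntropy [MeasurableSpace X] (μ : Measure X) (f : X → X) : EReal :=
  ⨆ (k : ℕ) (P : Fin k → Set X) (_ : IsMeasPartition P),
    ⨅ n : ℕ, ((((n : ℝ) + 1)⁻¹ * partitionEntropy μ f P (n + 1) : ℝ) : EReal)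

/-- `μ` is an equilibrium measure for `ψ` and `φ`:
`(h_μ(f) + ∫ φ dμ) / ∫ ψ dμ = P_ψ(φ)` (written multiplicatively in `EReal`). -/
noncomputable def IsEquilibriumMeasure [MetricSpace X] [MeasurableSpace X]
    (f : X → X) (φ ψ : X → ℝ) (μ : Measure X) : Prop :=
  (ksEntropy μ f + ((∫ x, φ x ∂μ : ℝ) : EReal)) * (((∫ x, ψ x ∂μ)⁻¹ : ℝ) : EReal)
    = inducedPressure f φ ψ

/-- A labelling of `X` all of whose fibers are measurable. -/
def MeasurableFibers [MeasurableSpace X] {ι : Type*} (g : X → ι) : Prop :=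
  ∀ i, MeasurableSet (g ⁻¹' {i})

/-- Shannon entropy of a finite labelling `g` with respect to `μ`. -/
noncomputable def labelEntropy [MeasurableSpace X] (μ : Measure X) {ι : Type*} [Fintype ι]
    (g : X → ι) : ℝ :=
  ∑ i, Real.negMulLog (μ.real (g ⁻¹' {i}))

/-- The block of labels seen at times `a, …, a + n - 1`. -/
def itinerary {ι : Type*} (f : X → X) (q : X → ι) (a n : ℕ) (x : X) : Fin n → ι :=
  fun i => q (f^[a + i] x)

/-- Gibbs' inequality. -/
lemma sum_negMulLog_le_of_weights {ι : Type*} [Fintype ι] (p q : ι → ℝ)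
    (hp : ∀ i, 0 ≤ p i) (hq : ∀ i, 0 ≤ q i) (hpq : ∀ i, q i = 0 → p i = 0)
    (hp1 : ∑ i, p i = 1) (hq1 : ∑ i, q i ≤ 1) :
    ∑ i, Real.negMulLog (p i) ≤ -∑ i, p i * Real.log (q i) := by
  have key : ∀ i, Real.negMulLog (p i) ≤ -(p i * Real.log (q i)) + (q i - p i) := by
    intro i
    rcases (hp i).eq_or_lt with h | h
    · simp [← h, hq i]
    · have hqi : 0 < q i := (hq i).lt_of_ne fun h' => h.ne' (hpq i h'.symm)
      have h1 := Real.log_le_sub_one_of_pos (div_pos hqi h)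
      rw [Real.log_div hqi.ne' h.ne'] at h1
      have h2 := mul_le_mul_of_nonneg_left h1 h.le
      have h3 : p i * (q i / p i - 1) = q i - p i := by field_simp
      rw [Real.negMulLog]
      nlinarith
  calc ∑ i, Real.negMulLog (p i) ≤ ∑ i, (-(p i * Real.log (q i)) + (q i - p i)) :=
        Finset.sum_le_sum fun i _ => key i
    _ = -∑ i, p i * Real.log (q i) + (∑ i, q i - ∑ i, p i) := by
        rw [Finset.sum_add_distrib, Finset.sum_neg_distrib, Finset.sum_sub_distrib]
    _ ≤ _ := by linarith

lemma negMulLog_sum_le {ι : Type*} (s : Finset ι) (p : ι → ℝ) (hp : ∀ i, 0 ≤ p i) :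
    Real.negMulLog (∑ i ∈ s, p i) ≤ ∑ i ∈ s, Real.negMulLog (p i) := by
  rw [Real.negMulLog, neg_mul, Finset.sum_mul, ← Finset.sum_neg_distrib]
  refine Finset.sum_le_sum fun i hi => ?_
  rcases (hp i).eq_or_lt with h | h
  · simp [← h]
  · have := Real.log_le_log h (Finset.single_le_sum (fun j _ => hp j) hi)
    rw [Real.negMulLog]
    nlinarith

lemma MeasurableFibers.prodMk [MeasurableSpace X] {ι κ : Type*} {g : X → ι} {h : X → κ}
    (hg : MeasurableFibers g)
    (hh : MeasurableFibers h) : MeasurableFibers fun x => (g x, h x) := by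
  rintro ⟨i, j⟩
  convert (hg i).inter (hh j) using 1
  ext x
  simp

lemma MeasurableFibers.comp [MeasurableSpace X] {ι : Type*} {g : X → ι} (hg : MeasurableFibers g)
    {f : X → X} (hf : Measurable f) : MeasurableFibers fun x => g (f x) :=
  fun i => hf (hg i)

lemma itinerary_iterate {ι : Type*} (f : X → X) (q : X → ι) (a b n : ℕ) (x : X) :
    itinerary f q b n (f^[a] x) = itinerary f q (a + b) n x := by
  ext i
  simp only [itinerary]
  rw [← Function.iterate_add_apply]
  congr 2
  omega

lemma MeasurableFibers.itinerary [MeasurableSpace X] {ι : Type*} {f : X → X} (hf : Measurable f)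
    {q : X → ι} (hq : MeasurableFibers q) (a n : ℕ) : MeasurableFibers (itinerary f q a n) := by
  intro w
  have : _root_.itinerary f q a n ⁻¹' {w} = ⋂ i : Fin n, (fun x => q (f^[a + i] x)) ⁻¹' {w i} := by
    ext x
    simp [_root_.itinerary, funext_iff]
  rw [this]
  exact MeasurableSet.iInter fun i => hq.comp (hf.iterate _) _

section Entropy

variable [MeasurableSpace X] {ι κ : Type*} [Fintype ι] [Fintype κ]

lemma MeasurableFibers.preimage {g : X → ι} (hg : MeasurableFibers g) (s : Set ι) :
    MeasurableSet (g ⁻¹' s) := by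
  rw [← biUnion_of_singleton s, preimage_iUnion₂]
  exact MeasurableSet.biUnion (to_countable s) fun i _ => hg i

lemma sum_measureReal_fibers_inter (μ : Measure X) [IsFiniteMeasure μ] {g : X → ι}
    (hg : MeasurableFibers g) {s : Set X} (hs : MeasurableSet s) :
    ∑ i, μ.real (s ∩ g ⁻¹' {i}) = μ.real s := by
  rw [← measureReal_iUnion_fintype]
  · congr 1
    ext x
    simp
  · intro i j hij
    refine Set.disjoint_left.2 ?_
    rintro x ⟨-, hx⟩ ⟨-, hy⟩
    exact hij (by rw [← mem_singleton_iff.1 hx, ← mem_singleton_iff.1 hy])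
  · exact fun i => hs.inter (hg i)

lemma sum_measureReal_fibers (μ : Measure X) [IsProbabilityMeasure μ] {g : X → ι}
    (hg : MeasurableFibers g) : ∑ i, μ.real (g ⁻¹' {i}) = 1 := by
  simpa using sum_measureReal_fibers_inter μ hg MeasurableSet.univ

lemma integral_comp_fibers (μ : Measure X) [IsFiniteMeasure μ] {g : X → ι}
    (hg : MeasurableFibers g) (u : ι → ℝ) :
    Integrable (fun x => u (g x)) μ ∧ ∫ x, u (g x) ∂μ = ∑ i, μ.real (g ⁻¹' {i}) * u i := by
  have h : (fun x => u (g x)) = fun x => ∑ i, (g ⁻¹' {i}).indicator (fun _ => u i) x := by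
    classical
    ext x
    simp [Set.indicator_apply]
  rw [h]
  have hi : ∀ i ∈ (Finset.univ : Finset ι),
      Integrable ((g ⁻¹' {i}).indicator fun _ => u i) μ :=
    fun i _ => (integrable_const _).indicator (hg i)
  refine ⟨integrable_finsetSum _ hi, ?_⟩
  rw [integral_finsetSum _ hi]
  refine Finset.sum_congr rfl fun i _ => ?_
  rw [integral_indicator_const _ (hg i), smul_eq_mul]

lemma labelEntropy_prodMk_le (μ : Measure X) [IsProbabilityMeasure μ] {g : X → ι} {h : X → κ}
    (hg : MeasurableFibers g) (hh : MeasurableFibers h) :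
    labelEntropy μ (fun x => (g x, h x)) ≤ labelEntropy μ g + labelEntropy μ h := by
  have hgh := hg.prodMk hh
  have hfib : ∀ i j, (fun x => (g x, h x)) ⁻¹' {(i, j)} = g ⁻¹' {i} ∩ h ⁻¹' {j} := by
    intro i j
    ext x
    simp
  have s1 : ∀ i, ∑ j, μ.real (g ⁻¹' {i} ∩ h ⁻¹' {j}) = μ.real (g ⁻¹' {i}) :=
    fun i => sum_measureReal_fibers_inter μ hh (hg i)
  have s2 : ∀ j, ∑ i, μ.real (g ⁻¹' {i} ∩ h ⁻¹' {j}) = μ.real (h ⁻¹' {j}) := by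
    intro j
    simp_rw [inter_comm _ (h ⁻¹' {j})]
    exact sum_measureReal_fibers_inter μ hg (hh j)
  have e1 := sum_measureReal_fibers μ hg
  have e2 := sum_measureReal_fibers μ hh
  have z : ∀ i j, μ.real (g ⁻¹' {i}) * μ.real (h ⁻¹' {j}) = 0 →
      μ.real (g ⁻¹' {i} ∩ h ⁻¹' {j}) = 0 := by
    intro i j hij
    rcases mul_eq_zero.1 hij with h0 | h0
    · exact measureReal_mono_null inter_subset_left h0
    · exact measureReal_mono_null inter_subset_right h0
  refine (sum_negMulLog_le_of_weights (fun x : ι × κ => μ.real ((fun x => (g x, h x)) ⁻¹' {x}))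
    (fun x => μ.real (g ⁻¹' {x.1}) * μ.real (h ⁻¹' {x.2})) (fun _ => measureReal_nonneg)
    (fun _ => mul_nonneg measureReal_nonneg measureReal_nonneg) ?_
    (sum_measureReal_fibers μ hgh) ?_).trans_eq ?_
  · rintro ⟨i, j⟩ hij
    rw [hfib]
    exact z i j hij
  · rw [Fintype.sum_prod_type]
    simp only [← Finset.mul_sum, ← Finset.sum_mul, e1, e2, one_mul, le_refl]
  · have : ∀ i j, μ.real (g ⁻¹' {i} ∩ h ⁻¹' {j}) *
        Real.log (μ.real (g ⁻¹' {i}) * μ.real (h ⁻¹' {j})) =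
        μ.real (g ⁻¹' {i} ∩ h ⁻¹' {j}) * Real.log (μ.real (g ⁻¹' {i})) +
        μ.real (g ⁻¹' {i} ∩ h ⁻¹' {j}) * Real.log (μ.real (h ⁻¹' {j})) := by
      intro i j
      by_cases h0 : μ.real (g ⁻¹' {i}) * μ.real (h ⁻¹' {j}) = 0
      · simp [z i j h0]
      · rw [Real.log_mul (left_ne_zero_of_mul h0) (right_ne_zero_of_mul h0), mul_add]
    rw [Fintype.sum_prod_type]
    simp only [hfib, this, Finset.sum_add_distrib]
    rw [Finset.sum_comm (f := fun i j => μ.real (g ⁻¹' {i} ∩ h ⁻¹' {j}) *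
      Real.log (μ.real (h ⁻¹' {j})))]
    simp only [← Finset.sum_mul, s1, s2, labelEntropy, Real.negMulLog, neg_mul,
      Finset.sum_neg_distrib, neg_add]

lemma labelEntropy_le_of_factor (μ : Measure X) [IsProbabilityMeasure μ] {g : X → ι} {h : X → κ}
    (hh : MeasurableFibers h) (hgh : ∀ x y, h x = h y → g x = g y) :
    labelEntropy μ g ≤ labelEntropy μ h := by
  classical
  obtain ⟨x₀⟩ : Nonempty X := nonempty_of_isProbabilityMeasure μ
  obtain ⟨F, hF⟩ : ∃ F : κ → ι, ∀ x, g x = F (h x) :=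
    ⟨Function.extend h g fun _ => g x₀,
      fun x => ((Function.FactorsThrough.extend_apply (fun a b hab => hgh a b hab) _ x).symm)⟩
  have hfib : ∀ i, μ.real (g ⁻¹' {i}) = ∑ j with F j = i, μ.real (h ⁻¹' {j}) := by
    intro i
    rw [← measureReal_biUnion_finset]
    · congr 1
      ext x
      simp [hF]
    · intro a _ b _ hab
      refine Set.disjoint_left.2 fun x hx hy => hab ?_
      rw [← mem_singleton_iff.1 hx, ← mem_singleton_iff.1 hy]
    · exact fun j _ => hh j
  calc labelEntropy μ g ≤ ∑ i, ∑ j with F j = i, Real.negMulLog (μ.real (h ⁻¹' {j})) := by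
        refine Finset.sum_le_sum fun i _ => ?_
        rw [hfib]
        exact negMulLog_sum_le _ _ fun _ => measureReal_nonneg
    _ = labelEntropy μ h := Finset.sum_fiberwise _ _ _

lemma labelEntropy_le_log_card (μ : Measure X) [IsProbabilityMeasure μ] {g : X → ι}
    (hg : MeasurableFibers g) : labelEntropy μ g ≤ Real.log (Fintype.card ι) := by
  obtain ⟨x₀⟩ : Nonempty X := nonempty_of_isProbabilityMeasure μ
  have hc : (0 : ℝ) < Fintype.card ι := by exact_mod_cast Fintype.card_pos_iff.2 ⟨g x₀⟩
  refine (sum_negMulLog_le_of_weights _ (fun _ => (Fintype.card ι : ℝ)⁻¹)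
    (fun _ => measureReal_nonneg) (fun _ => by positivity)
    (fun _ h => absurd h (by positivity)) (sum_measureReal_fibers μ hg) ?_).trans_eq ?_
  · simp [hc.ne']
  · rw [← Finset.sum_mul, sum_measureReal_fibers μ hg, Real.log_inv]
    ring

lemma labelEntropy_nonneg (μ : Measure X) [IsProbabilityMeasure μ] (g : X → ι) :
    0 ≤ labelEntropy μ g :=
  Finset.sum_nonneg fun _ _ => Real.negMulLog_nonneg measureReal_nonneg measureReal_le_one

variable {f : X → X} {q : X → ι}

lemma labelEntropy_itinerary_add_le (μ : Measure X) [IsProbabilityMeasure μ] (hf : Measurable f)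
    (hq : MeasurableFibers q) (a m n : ℕ) :
    labelEntropy μ (itinerary f q a (m + n)) ≤
      labelEntropy μ (itinerary f q a m) + labelEntropy μ (itinerary f q (a + m) n) := by
  have h1 := hq.itinerary hf a m
  have h2 := hq.itinerary hf (a + m) n
  refine (labelEntropy_le_of_factor μ (h1.prodMk h2) fun x y hxy => ?_).trans
    (labelEntropy_prodMk_le μ h1 h2)
  simp only [Prod.mk.injEq, funext_iff, itinerary] at hxy
  ext i
  rcases lt_or_ge (i : ℕ) m with hi | hi
  · exact hxy.1 ⟨i, hi⟩
  · have := hxy.2 ⟨i - m, by omega⟩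
    have e : a + m + (i - m) = a + i := by omega
    simpa only [e, itinerary] using this

lemma labelEntropy_itinerary_mono (μ : Measure X) [IsProbabilityMeasure μ] (hf : Measurable f)
    (hq : MeasurableFibers q) (a : ℕ) {m n : ℕ} (h : m ≤ n) :
    labelEntropy μ (itinerary f q a m) ≤ labelEntropy μ (itinerary f q a n) := by
  refine labelEntropy_le_of_factor μ (hq.itinerary hf a n) fun x y hxy => ?_
  ext i
  exact congrFun hxy ⟨i, i.2.trans_le h⟩

lemma labelEntropy_itinerary_le_sum (μ : Measure X) [IsProbabilityMeasure μ] (hf : Measurable f)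
    (hq : MeasurableFibers q) (a n : ℕ) :
    labelEntropy μ (itinerary f q a n) ≤
      ∑ i ∈ Finset.range n, labelEntropy μ fun x => q (f^[a + i] x) := by
  induction n with
  | zero =>
    refine (labelEntropy_le_log_card μ (hq.itinerary hf a 0)).trans ?_
    simp
  | succ n ih =>
    rw [Finset.sum_range_succ]
    refine (labelEntropy_itinerary_add_le μ hf hq a n 1).trans (add_le_add ih ?_)
    refine labelEntropy_le_of_factor μ (hq.comp (hf.iterate _)) fun x y hxy => ?_
    ext i
    have : i = 0 := Subsingleton.elim _ _
    subst this
    simpa [itinerary] using hxy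

lemma labelEntropy_itinerary_le (μ : Measure X) [IsProbabilityMeasure μ] (hf : Measurable f)
    (hq : MeasurableFibers q) (a n : ℕ) :
    labelEntropy μ (itinerary f q a n) ≤ n * Real.log (Fintype.card ι) := by
  refine (labelEntropy_le_log_card μ (hq.itinerary hf a n)).trans_eq ?_
  simp

lemma labelEntropy_map (μ : Measure X) {g : X → ι} (hg : MeasurableFibers g)
    {T : X → X} (hT : Measurable T) :
    labelEntropy (μ.map T) g = labelEntropy μ fun x => g (T x) := by
  unfold labelEntropy
  refine Finset.sum_congr rfl fun i _ => ?_
  rw [map_measureReal_apply hT (hg i)]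
  rfl

/-- Splitting a long block along all residues modulo `m`. -/
lemma mul_labelEntropy_itinerary_le (μ : Measure X) [IsProbabilityMeasure μ] (hf : Measurable f)
    (hq : MeasurableFibers q) {m : ℕ} (hm : 0 < m) (n : ℕ) :
    m * labelEntropy μ (itinerary f q 0 n) ≤
      ∑ i ∈ Finset.range n, labelEntropy μ (itinerary f q i m) +
        2 * m ^ 2 * Real.log (Fintype.card ι) := by
  set L := Real.log (Fintype.card ι)
  have hL : 0 ≤ L := Real.log_natCast_nonneg _
  set E : ℕ → ℕ → ℝ := fun a n => labelEntropy μ (itinerary f q a n) with hE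
  have hEnn : ∀ a n, 0 ≤ E a n := fun a n => labelEntropy_nonneg μ _
  have blocks : ∀ r : ℕ, ∑ j ∈ Finset.range m, E j (r * m) ≤
      ∑ i ∈ Finset.range (r * m), E i m := by
    intro r
    induction r with
    | zero =>
      rw [zero_mul, Finset.range_zero, Finset.sum_empty]
      refine Finset.sum_nonpos fun j _ => ?_
      simpa using labelEntropy_itinerary_le μ hf hq j 0
    | succ r ih =>
      rw [Nat.succ_mul, Finset.sum_range_add]
      have : ∀ j ∈ Finset.range m, E j (r * m + m) ≤ E j (r * m) + E (r * m + j) m := by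
        intro j _
        have := labelEntropy_itinerary_add_le μ hf hq j (r * m) m
        rwa [add_comm j] at this
      refine (Finset.sum_le_sum this).trans ?_
      rw [Finset.sum_add_distrib]
      linarith
  have one : ∀ j ∈ Finset.range m, E 0 n ≤ E j (n / m * m) + 2 * m * L := by
    intro j hj
    have hj' : j < m := Finset.mem_range.1 hj
    have hn : n ≤ j + (n / m * m + m) := by
      have := Nat.lt_div_mul_add hm (a := n)
      omega
    have h1 := labelEntropy_itinerary_mono μ hf hq 0 hn
    have h2 := labelEntropy_itinerary_add_le μ hf hq 0 j (n / m * m + m)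
    have h3 := labelEntropy_itinerary_add_le μ hf hq (0 + j) (n / m * m) m
    have h4 := labelEntropy_itinerary_le μ hf hq 0 j
    have h5 := labelEntropy_itinerary_le μ hf hq (0 + j + n / m * m) m
    have h6 : (j : ℝ) * L ≤ m * L := by gcongr
    rw [zero_add] at h2 h3 h5
    simp only [hE]
    linarith
  have h := Finset.sum_le_sum one
  rw [Finset.sum_const, Finset.card_range, nsmul_eq_mul, Finset.sum_add_distrib, Finset.sum_const,
    Finset.card_range, nsmul_eq_mul] at h
  have h' : ∑ i ∈ Finset.range (n / m * m), E i m ≤ ∑ i ∈ Finset.range n, E i m :=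
    Finset.sum_le_sum_of_subset_of_nonneg
      (Finset.range_subset_range.2 (Nat.div_mul_le_self n m)) fun i _ _ => hEnn i m
  have := blocks (n / m)
  nlinarith

end Entropy

section KolmogorovSinai

variable [MeasurableSpace X]

lemma partitionEntropy_eq_labelEntropy (μ : Measure X) (f : X → X) {k : ℕ} (q : X → Fin k)
    (n : ℕ) :
    partitionEntropy μ f (fun i => q ⁻¹' {i}) n = labelEntropy μ (itinerary f q 0 n) := by
  refine Finset.sum_congr rfl fun w _ => ?_
  rw [Measure.real]
  congr 3
  ext x
  simp [cellOf, itinerary, funext_iff]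

lemma IsMeasPartition.exists_label {k : ℕ} {P : Fin k → Set X} (hP : IsMeasPartition P) :
    ∃ q : X → Fin k, MeasurableFibers q ∧ P = fun i => q ⁻¹' {i} := by
  obtain ⟨hm, hd, hu⟩ := hP
  have : ∀ x, ∃ i, x ∈ P i := fun x => mem_iUnion.1 (hu ▸ mem_univ x)
  choose q hq using this
  have h : P = fun i => q ⁻¹' {i} := by
    ext i x
    refine ⟨fun hx => ?_, fun hx => ?_⟩
    · by_contra hne
      exact Set.disjoint_left.1 (hd hne) (hq x) hx
    · rw [← mem_singleton_iff.1 hx]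
      exact hq x
  exact ⟨q, fun i => by simpa only [h] using hm i, h⟩

lemma MeasurableFibers.isMeasPartition {k : ℕ} {q : X → Fin k} (hq : MeasurableFibers q) :
    IsMeasPartition fun i => q ⁻¹' {i} := by
  refine ⟨hq, fun i j hij => Set.disjoint_left.2 fun x hx hy => hij ?_, ?_⟩
  · rw [← mem_singleton_iff.1 hx, ← mem_singleton_iff.1 hy]
  · ext x
    simp

lemma ksEntropy_le (μ : Measure X) (f : X → X) (a : ℝ)
    (h : ∀ (k : ℕ) (q : X → Fin k), MeasurableFibers q → ∀ η : ℝ, 0 < η → ∃ n : ℕ,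
      labelEntropy μ (itinerary f q 0 (n + 1)) ≤ (n + 1) * (a + η)) :
    ksEntropy μ f ≤ a := by
  refine iSup_le fun k => iSup_le fun P => iSup_le fun hP => ?_
  obtain ⟨q, hq, rfl⟩ := hP.exists_label
  refine EReal.le_of_forall_lt_iff_le.1 fun z hz => ?_
  obtain ⟨n, hn⟩ := h k q hq (z - a) (sub_pos.2 (by exact_mod_cast hz))
  refine iInf_le_of_le n ?_
  rw [partitionEntropy_eq_labelEntropy, EReal.coe_le_coe_iff, inv_mul_le_iff₀ (by positivity)]
  simpa using hn

lemma le_ksEntropy (μ : Measure X) (f : X → X) (a : ℝ) {k : ℕ} {q : X → Fin k}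
    (hq : MeasurableFibers q)
    (h : ∀ n : ℕ, (n + 1) * a ≤ labelEntropy μ (itinerary f q 0 (n + 1))) :
    (a : EReal) ≤ ksEntropy μ f := by
  refine le_iSup_of_le k (le_iSup_of_le _ (le_iSup_of_le hq.isMeasPartition (le_iInf fun n => ?_)))
  rw [partitionEntropy_eq_labelEntropy, EReal.coe_le_coe_iff, le_inv_mul_iff₀ (by positivity)]
  exact h n

lemma ksEntropy_nonneg (μ : Measure X) [IsProbabilityMeasure μ] (f : X → X) :
    0 ≤ ksEntropy μ f := by
  have hq : MeasurableFibers fun _ : X => (0 : Fin 1) := fun i => by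
    rw [Subsingleton.elim i 0]
    simp
  have := le_ksEntropy μ f 0 hq fun n => by
    rw [mul_zero]
    exact labelEntropy_nonneg μ _
  exact_mod_cast this

/-- For an invariant measure, `n`-block entropies dominate the entropy of the orbit up to a
bounded error. -/
lemma MeasureTheory.MeasurePreserving.mul_labelEntropy_le {μ : Measure X}
    [IsProbabilityMeasure μ] {f : X → X} (hμ : MeasurePreserving f μ μ) {ι : Type*} [Fintype ι]
    {q : X → ι} (hq : MeasurableFibers q) {m : ℕ} (hm : 0 < m) (n : ℕ) :
    m * labelEntropy μ (itinerary f q 0 n) ≤ n * labelEntropy μ (itinerary f q 0 m) +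
        2 * m ^ 2 * Real.log (Fintype.card ι) := by
  have h := mul_labelEntropy_itinerary_le μ hμ.measurable hq hm n
  have : ∀ i, labelEntropy μ (itinerary f q i m) = labelEntropy μ (itinerary f q 0 m) := by
    intro i
    conv_rhs => rw [← (hμ.iterate i).map_eq]
    rw [labelEntropy_map μ (hq.itinerary hμ.measurable 0 m) (hμ.measurable.iterate i)]
    simp only [itinerary_iterate, add_zero]
  simpa [this] using h

end KolmogorovSinai

/-- Positive expansivity is uniform: staying close for a bounded time forces closeness. -/
lemma exists_dist_lt_of_expansive [MetricSpace X] [CompactSpace X] {f : X → X} (hf : Continuous f)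
    {ε : ℝ}
    (hexp : ∀ x y : X, (∀ n : ℕ, dist (f^[n] x) (f^[n] y) < ε) → x = y) {ε' : ℝ} (hε' : ε' < ε)
    {δ : ℝ} (hδ : 0 < δ) :
    ∃ m : ℕ, ∀ x y : X, (∀ i < m, dist (f^[i] x) (f^[i] y) ≤ ε') → dist x y < δ := by
  by_contra! hcon
  set C : ℕ → Set (X × X) := fun m =>
    {p | (∀ i < m, dist (f^[i] p.1) (f^[i] p.2) ≤ ε') ∧ δ ≤ dist p.1 p.2} with hC
  have hcl : ∀ m, IsClosed (C m) := by
    intro m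
    have hset : C m = (⋂ i, ⋂ (_ : i < m), {p : X × X | dist (f^[i] p.1) (f^[i] p.2) ≤ ε'}) ∩
        {p | δ ≤ dist p.1 p.2} := by
      ext p
      simp [hC]
    rw [hset]
    refine IsClosed.inter ?_ (isClosed_le continuous_const continuous_dist)
    exact isClosed_iInter fun i => isClosed_iInter fun _ => isClosed_le
      (((hf.iterate i).comp continuous_fst).dist ((hf.iterate i).comp continuous_snd))
      continuous_const
  obtain ⟨⟨x, y⟩, hxy⟩ := IsCompact.nonempty_iInter_of_sequence_nonempty_isCompact_isClosed C
    (fun m p hp => ⟨fun i hi => hp.1 i (hi.trans (Nat.lt_succ_self m)), hp.2⟩)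
    (fun m => by
      obtain ⟨x, y, h⟩ := hcon m
      exact ⟨(x, y), h⟩)
    (hcl 0).isCompact hcl
  rw [mem_iInter] at hxy
  have : x = y := hexp x y fun n => ((hxy (n + 1)).1 n (Nat.lt_succ_self n)).trans_lt hε'
  have h2 : δ ≤ dist x y := (hxy 0).2
  rw [this, dist_self] at h2
  exact absurd hδ (not_lt.2 h2)

section Approximation

variable [MetricSpace X] [CompactSpace X] [MeasurableSpace X] [BorelSpace X]

/-- Up to a small proportion of time, a measurable labelling of an orbit segment is determined by
any labelling whose fibers are dynamically small. -/
lemma exists_labelEntropy_itinerary_le {μ : Measure X} [IsProbabilityMeasure μ] {f : X → X}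
    (hμ : MeasurePreserving f μ μ) {k : ℕ} {r : X → Fin k} (hr : MeasurableFibers r) {η : ℝ}
    (hη : 0 < η) :
    ∃ δ > 0, ∀ (N : ℕ) (I : Type*) [Fintype I] (c : X → I), MeasurableFibers c →
      (∀ x y, c x = c y → ∀ i < N, dist (f^[i] x) (f^[i] y) < δ) →
      labelEntropy μ (itinerary f r 0 N) ≤ labelEntropy μ c + N * η := by
  classical
  have hη' : 0 < η / (k + 1) := by positivity
  obtain ⟨θ₀, hθ₀, h0⟩ := Metric.continuous_iff.1 Real.continuous_negMulLog 0 _ hη'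
  obtain ⟨θ₁, hθ₁, h1⟩ := Metric.continuous_iff.1 Real.continuous_negMulLog 1 _ hη'
  simp only [Real.negMulLog_zero, Real.negMulLog_one, dist_zero_right, Real.norm_eq_abs] at h0 h1
  have hpos : 0 < min θ₀ (θ₁ / (k + 1)) := by positivity
  have hK : ∀ i, ∃ K ⊆ r ⁻¹' {i}, IsClosed K ∧
      μ ((r ⁻¹' {i}) \ K) < ENNReal.ofReal (min θ₀ (θ₁ / (k + 1))) :=
    fun i => (hr i).exists_isClosed_sdiff_lt (measure_ne_top _ _)
      (by simpa using hpos)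
  choose K hKr hKc hKμ using hK
  have hKμ' : ∀ i, μ.real ((r ⁻¹' {i}) \ K i) < min θ₀ (θ₁ / (k + 1)) := fun i =>
    (ENNReal.lt_ofReal_iff_toReal_lt (measure_ne_top _ _)).1 (hKμ i)
  obtain ⟨δ, hδ, hsep⟩ : ∃ δ, 0 < δ ∧ ∀ i j, i ≠ j → ∀ x ∈ K i, ∀ y ∈ K j, δ ≤ dist x y := by
    have hD : IsCompact (⋃ p : {p : Fin k × Fin k // p.1 ≠ p.2}, K p.1.1 ×ˢ K p.1.2) :=
      isCompact_iUnion fun p => (hKc _).isCompact.prod (hKc _).isCompact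
    obtain ⟨δ, hδ, h⟩ := hD.exists_forall_le' (f := fun p : X × X => dist p.1 p.2) (a := 0)
      continuous_dist.continuousOn (by
        rintro ⟨x, y⟩ hxy
        obtain ⟨⟨⟨i, j⟩, hij⟩, hx, hy⟩ := mem_iUnion.1 hxy
        refine dist_pos.2 fun hxy' => hij ?_
        have hxj : x ∈ r ⁻¹' {j} := by
          rw [show x = y from hxy']
          exact hKr j hy
        exact (hKr i hx).symm.trans hxj)
    exact ⟨δ, hδ, fun i j hij x hx y hy => h (x, y) (mem_iUnion.2 ⟨⟨(i, j), hij⟩, hx, hy⟩)⟩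
  set b : X → Option (Fin k) := fun x => if x ∈ K (r x) then none else some (r x) with hb
  have hbsome : ∀ i, b ⁻¹' {some i} = r ⁻¹' {i} \ K i := by
    intro i
    ext x
    by_cases hx : x ∈ K (r x)
    · simp only [mem_preimage, hb, hx, if_true, mem_singleton_iff, reduceCtorEq, false_iff,
        Set.mem_sdiff, not_and, not_not]
      rintro rfl
      exact hx
    · simp only [mem_preimage, hb, hx, if_false, mem_singleton_iff, Option.some.injEq,
        Set.mem_sdiff, iff_self_and]
      rintro rfl
      exact hx
  have hbm : MeasurableFibers b := by
    have hs : ∀ i, MeasurableSet (b ⁻¹' {some i}) := fun i => by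
      rw [hbsome]
      exact (hr i).diff (hKc i).measurableSet
    rintro (_ | i)
    · have : b ⁻¹' {none} = (⋃ i, b ⁻¹' {some i})ᶜ := by
        ext x
        cases h : b x <;> simp [h]
      rw [this]
      exact (MeasurableSet.iUnion hs).compl
    · exact hs i
  have hsome : ∀ i, Real.negMulLog (μ.real (b ⁻¹' {some i})) ≤ η / (k + 1) := by
    intro i
    refine (le_abs_self _).trans (h0 _ ?_).le
    rw [hbsome, abs_of_nonneg measureReal_nonneg]
    exact (hKμ' i).trans_le (min_le_left _ _)
  have hsum := sum_measureReal_fibers μ hbm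
  rw [Fintype.sum_option] at hsum
  have hnone : Real.negMulLog (μ.real (b ⁻¹' {none})) ≤ η / (k + 1) := by
    refine (le_abs_self _).trans (h1 _ ?_).le
    have h2 : ∑ i, μ.real (b ⁻¹' {some i}) ≤ ∑ _i : Fin k, θ₁ / (k + 1) :=
      Finset.sum_le_sum fun i _ => by
        rw [hbsome]
        exact ((hKμ' i).trans_le (min_le_right _ _)).le
    have h3 : ∑ _i : Fin k, θ₁ / (k + 1) < θ₁ := by
      rw [Finset.sum_const, Finset.card_univ, Fintype.card_fin, nsmul_eq_mul, mul_div_assoc',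
        div_lt_iff₀ (by positivity)]
      nlinarith
    rw [Real.dist_eq, abs_lt]
    have h4 : μ.real (b ⁻¹' {none}) ≤ 1 := measureReal_le_one
    constructor <;> linarith
  have hbη : labelEntropy μ b ≤ η := by
    rw [labelEntropy, Fintype.sum_option]
    calc _ ≤ η / (k + 1) + ∑ _i : Fin k, η / (k + 1) :=
          add_le_add hnone (Finset.sum_le_sum fun i _ => hsome i)
      _ = η := by
          rw [Finset.sum_const, Finset.card_univ, Fintype.card_fin, nsmul_eq_mul]
          field_simp
          ring
  refine ⟨δ, hδ, fun N I _ c hc hcd => ?_⟩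
  have hbN := hbm.itinerary hμ.measurable 0 N
  have h2 : labelEntropy μ (itinerary f b 0 N) ≤ N * η := by
    refine (labelEntropy_itinerary_le_sum μ hμ.measurable hbm 0 N).trans ?_
    have : ∀ i, (labelEntropy μ fun x => b (f^[0 + i] x)) = labelEntropy μ b := by
      intro i
      rw [← labelEntropy_map μ hbm (hμ.measurable.iterate _), (hμ.iterate _).map_eq]
    simp only [this, Finset.sum_const, Finset.card_range, nsmul_eq_mul]
    gcongr
  refine (labelEntropy_le_of_factor μ (hc.prodMk hbN) fun x y hxy => ?_).trans
    ((labelEntropy_prodMk_le μ hc hbN).trans (by linarith))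
  simp only [Prod.mk.injEq] at hxy
  ext i : 1
  have hbi := congrFun hxy.2 i
  have hdi := hcd x y hxy.1 i i.2
  simp only [itinerary, zero_add] at hbi ⊢
  set u := f^[i] x
  set v := f^[i] y
  by_contra hne
  by_cases hu : u ∈ K (r u) <;> by_cases hv : v ∈ K (r v) <;>
    simp only [hb, hu, hv, if_true, if_false, reduceCtorEq, Option.some.injEq] at hbi
  · exact absurd (hsep _ _ hne u hu v hv) (not_le.2 hdi)
  · exact hne hbi

/-- For a positively expansive map, every sufficiently fine labelling is generating. -/
lemma ksEntropy_le_of_expansive {f : X → X} {ε : ℝ}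
    (hexp : ∀ x y : X, (∀ n : ℕ, dist (f^[n] x) (f^[n] y) < ε) → x = y) (hf : Continuous f)
    {ε' : ℝ} (hε' : ε' < ε) {μ : Measure X} [IsProbabilityMeasure μ]
    (hμ : MeasurePreserving f μ μ) {k : ℕ} {q : X → Fin k} (hq : MeasurableFibers q)
    (hqd : ∀ x y, q x = q y → dist x y ≤ ε') {m : ℕ} (hm : 0 < m) :
    ksEntropy μ f ≤ ((m : ℝ)⁻¹ * labelEntropy μ (itinerary f q 0 m) : ℝ) := by
  refine ksEntropy_le μ f _ fun l r hr η hη => ?_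
  obtain ⟨δ, hδ, h⟩ := exists_labelEntropy_itinerary_le hμ hr (half_pos hη)
  obtain ⟨s, hs⟩ := exists_dist_lt_of_expansive hf hexp hε' hδ
  set L := Real.log (Fintype.card (Fin k))
  set E := labelEntropy μ (itinerary f q 0 m)
  have hmr : (0 : ℝ) < m := by exact_mod_cast hm
  obtain ⟨N, hN⟩ := exists_nat_ge ((s * E + 2 * m ^ 2 * L) / (m * (η / 2)))
  rw [div_le_iff₀ (by positivity)] at hN
  refine ⟨N, ?_⟩
  have h1 := h (N + 1) _ (itinerary f q 0 (N + 1 + s)) (hq.itinerary hμ.measurable _ _)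
    fun x y hxy i hi => hs _ _ fun j hj => hqd _ _ (by
      have := congrFun hxy ⟨i + j, by omega⟩
      simp only [itinerary, zero_add] at this
      rwa [← Function.iterate_add_apply, ← Function.iterate_add_apply, add_comm j i])
  have h2 := hμ.mul_labelEntropy_le hq hm (N + 1 + s)
  push_cast at h1 h2
  have h3 : m * ((N + 1) * ((m : ℝ)⁻¹ * E + η)) = (N + 1) * E + m * ((N + 1) * η) := by
    field_simp
  refine le_of_mul_le_mul_left ?_ hmr
  rw [h3]
  nlinarith [mul_le_mul_of_nonneg_left h1 hmr.le, mul_pos hmr hη]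

end Approximation

section Birkhoff

lemma birkhoff_add_time (f : X → X) (χ : X → ℝ) (m n : ℕ) (x : X) :
    birkhoff f χ (m + n) x = birkhoff f χ m x + birkhoff f χ n (f^[m] x) := by
  simp only [birkhoff, Finset.sum_range_add, ← Function.iterate_add_apply, add_comm]

lemma birkhoff_le_of_close [MetricSpace X] {f : X → X} {χ : X → ℝ} {ε o : ℝ}
    (ho : ∀ x y, dist x y ≤ ε → |χ x - χ y| ≤ o) {n : ℕ} {x y : X}
    (h : ∀ i < n, dist (f^[i] x) (f^[i] y) ≤ ε) :
    |birkhoff f χ n x - birkhoff f χ n y| ≤ n * o := by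
  rw [birkhoff, birkhoff, ← Finset.sum_sub_distrib]
  refine (Finset.abs_sum_le_sum_abs _ _).trans ?_
  refine (Finset.sum_le_card_nsmul _ _ o fun i hi => ho _ _ (h i (Finset.mem_range.1 hi))).trans_eq
    ?_
  simp

lemma abs_birkhoff_le {f : X → X} {χ : X → ℝ} {B : ℝ} (hB : ∀ x, |χ x| ≤ B) (n : ℕ) (x : X) :
    |birkhoff f χ n x| ≤ n * B := by
  refine (Finset.abs_sum_le_sum_abs _ _).trans ?_
  refine (Finset.sum_le_card_nsmul _ _ B fun i _ => hB _).trans_eq ?_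
  simp

lemma le_birkhoff {f : X → X} {ψ : X → ℝ} {m : ℕ} {a : ℝ} (h : ∀ x, a ≤ ψ x) (x : X) :
    m * a ≤ birkhoff f ψ m x := by
  have := Finset.card_nsmul_le_sum (Finset.range m) (fun i => ψ (f^[i] x)) a fun i _ => h _
  simpa [birkhoff] using this

lemma birkhoff_sub_const_mul (f : X → X) (φ ψ : X → ℝ) (β : ℝ) (n : ℕ) (x : X) :
    birkhoff f (fun x => φ x - β * ψ x) n x = birkhoff f φ n x - β * birkhoff f ψ n x := by
  simp only [birkhoff, Finset.sum_sub_distrib, Finset.mul_sum]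

lemma continuous_birkhoff [TopologicalSpace X] {f : X → X} {χ : X → ℝ} (hf : Continuous f)
    (hχ : Continuous χ) (n : ℕ) : Continuous (birkhoff f χ n) :=
  continuous_finsetSum _ fun i _ => hχ.comp (hf.iterate i)

lemma integral_birkhoff [MeasurableSpace X] {μ : Measure X} {f : X → X}
    (hμ : MeasurePreserving f μ μ) {χ : X → ℝ} (hχ : Integrable χ μ) (n : ℕ) :
    ∫ x, birkhoff f χ n x ∂μ = n * ∫ x, χ x ∂μ := by
  have h1 : ∀ i, Integrable (fun x => χ (f^[i] x)) μ := fun i =>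
    (hμ.iterate i).integrable_comp_of_integrable hχ
  have h2 : ∀ i, ∫ x, χ (f^[i] x) ∂μ = ∫ x, χ x ∂μ := fun i => by
    have h := (hμ.iterate i).map_eq
    conv_rhs => rw [← h]
    rw [integral_map (hμ.iterate i).aemeasurable]
    rw [h]
    exact hχ.aestronglyMeasurable
  simp only [birkhoff]
  rw [integral_finsetSum _ fun i _ => h1 i]
  simp [h2]

lemma exists_mem_Xset {f : X → X} {ψ : X → ℝ} {m : ℝ} (hm : 0 < m) (hψ : ∀ x, m ≤ ψ x) {T : ℝ}
    (hT : 0 ≤ T) (x : X) : ∃ n, x ∈ Xset f ψ T n := by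
  classical
  have hex : ∃ n : ℕ, T < birkhoff f ψ (n + 1) x := by
    obtain ⟨n, hn⟩ := exists_nat_gt (T / m)
    refine ⟨n, lt_of_lt_of_le ?_ (le_birkhoff hψ x)⟩
    rw [div_lt_iff₀ hm] at hn
    push_cast
    linarith
  refine ⟨Nat.find hex, ?_, Nat.find_spec hex⟩
  rcases h : Nat.find hex with _ | n
  · simpa [birkhoff] using hT
  · exact not_lt.1 (Nat.find_min hex (h ▸ Nat.lt_succ_self n))

lemma mem_STset {f : X → X} {ψ : X → ℝ} {T : ℝ} {n : ℕ} {x : X} (h : x ∈ Xset f ψ T n) :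
    n ∈ STset f ψ T := ⟨x, h⟩

lemma le_floor_of_mem_STset {f : X → X} {ψ : X → ℝ} {m : ℝ} (hm : 0 < m) (hψ : ∀ x, m ≤ ψ x)
    {T : ℝ} {n : ℕ} (hn : n ∈ STset f ψ T) : n ≤ ⌊T / m⌋₊ := by
  obtain ⟨x, hx, -⟩ := hn
  refine Nat.le_floor ?_
  rw [le_div_iff₀ hm]
  exact (le_birkhoff hψ x).trans hx

open Classical in
lemma tsum_indicator_STset {f : X → X} {ψ : X → ℝ} {m : ℝ} (hm : 0 < m) (hψ : ∀ x, m ≤ ψ x)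
    (T : ℝ) (u : ℕ → ℝ) :
    ∑' n, Set.indicator (STset f ψ T) u n =
      ∑ n ∈ (Finset.range (⌊T / m⌋₊ + 1)).filter (· ∈ STset f ψ T), u n := by
  rw [tsum_eq_sum (s := Finset.range (⌊T / m⌋₊ + 1)), Finset.sum_filter]
  · simp only [Set.indicator_apply]
  · intro n hn
    refine Set.indicator_of_notMem (fun h => hn ?_) _
    rw [Finset.mem_range]
    have := le_floor_of_mem_STset hm hψ h
    omega

end Birkhoff

section Labels

lemma fiber_membership {ι : Type*} (B : ι → Set X) (s : Set ι) [DecidablePred (· ∈ s)] :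
    (fun x => {p | x ∈ B p}) ⁻¹' {s} = ⋂ p, if p ∈ s then B p else (B p)ᶜ := by
  ext x
  simp only [mem_preimage, mem_singleton_iff, mem_iInter, Set.ext_iff]
  refine forall_congr' fun p => ?_
  by_cases hp : p ∈ s <;> simp [hp]

lemma measurableFibers_membership [MeasurableSpace X] {ι : Type*} [Finite ι] (B : ι → Set X)
    (hB : ∀ p, MeasurableSet (B p)) : MeasurableFibers fun x => {p | x ∈ B p} := by
  classical
  intro s
  rw [fiber_membership]
  refine MeasurableSet.iInter fun p => ?_
  split_ifs
  exacts [hB p, (hB p).compl]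

lemma exists_label_of_cover [MeasurableSpace X] {ι : Type*} [Finite ι] (B : ι → Set X)
    (hB : ∀ p, MeasurableSet (B p)) (hcov : ∀ x, ∃ p, x ∈ B p) :
    ∃ a : X → ι, MeasurableFibers a ∧ ∀ x, x ∈ B (a x) := by
  classical
  have := Fintype.ofFinite ι
  rcases isEmpty_or_nonempty X with hX | ⟨⟨x₀⟩⟩
  · exact ⟨isEmptyElim, fun i => by simp [Set.eq_empty_of_isEmpty], isEmptyElim⟩
  let g : Set ι → ι := fun s => if h : s.Nonempty then h.some else (hcov x₀).choose
  refine ⟨fun x => g {p | x ∈ B p}, fun i => ?_, fun x => ?_⟩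
  · exact (measurableFibers_membership B hB).preimage (g ⁻¹' {i})
  · have h : {p | x ∈ B p}.Nonempty := hcov x
    have : g {p | x ∈ B p} = h.some := dif_pos h
    simp only [this]
    exact h.some_mem

lemma frontier_iInter_subset_of_finite [TopologicalSpace X] {ι : Type*} [Finite ι]
    (s : ι → Set X) : frontier (⋂ i, s i) ⊆ ⋃ i, frontier (s i) := by
  rintro x ⟨hx, hx'⟩
  by_contra hcon
  simp only [mem_iUnion, not_exists] at hcon
  refine hx' ?_
  rw [interior_iInter_of_finite, mem_iInter]
  intro i
  by_contra hi
  exact hcon i ⟨closure_mono (iInter_subset s i) hx, hi⟩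

/-- Fine finite labellings whose fibers have null frontiers. -/
lemma exists_fine_label [MetricSpace X] [CompactSpace X] [MeasurableSpace X] [BorelSpace X]
    (ν : Measure X) [IsFiniteMeasure ν] {δ : ℝ} (hδ : 0 < δ) :
    ∃ (k : ℕ) (q : X → Fin k), MeasurableFibers q ∧ (∀ x y, q x = q y → dist x y ≤ δ) ∧
      ∀ i, ν (frontier (q ⁻¹' {i})) = 0 := by
  classical
  have h : ∀ x : X, ∃ r ∈ Ioo 0 (δ / 2), ν (frontier (Metric.ball x r)) = 0 := by
    intro x
    obtain ⟨r, hr, h⟩ := exists_null_frontier_thickening ν {x} (half_pos hδ)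
    exact ⟨r, hr, by rwa [Metric.thickening_singleton] at h⟩
  choose r hr hν using h
  obtain ⟨t, ht⟩ := CompactSpace.elim_nhds_subcover (fun x => Metric.ball x (r x))
    fun x => Metric.ball_mem_nhds x (hr x).1
  let B : t → Set X := fun p => Metric.ball p.1 (r p.1)
  have hB := measurableFibers_membership B fun p => measurableSet_ball
  let e := Fintype.equivFin (Set t)
  have hfib : ∀ i, (fun x => e {p | x ∈ B p}) ⁻¹' {i} =
      (fun x => {p | x ∈ B p}) ⁻¹' {e.symm i} := by
    intro i
    ext x
    simp [e.eq_symm_apply]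
  refine ⟨_, fun x => e {p | x ∈ B p}, fun i => ?_, fun x y hxy => ?_, fun i => ?_⟩
  · rw [hfib]
    exact hB _
  · have hx : x ∈ ⋃ p ∈ t, Metric.ball p (r p) := ht ▸ mem_univ x
    obtain ⟨p, hp, hxp⟩ := mem_iUnion₂.1 hx
    have hyp : (⟨p, hp⟩ : t) ∈ {p | y ∈ B p} := by
      rw [← e.injective hxy]
      exact hxp
    have h1 : dist x p < r p := hxp
    have h2 : dist y p < r p := hyp
    have := dist_triangle_right x y p
    linarith [(hr p).2]
  · rw [hfib, fiber_membership]
    refine measure_mono_null (frontier_iInter_subset_of_finite _) (measure_iUnion_null fun p => ?_)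
    split_ifs
    · exact hν _
    · rw [frontier_compl]
      exact hν _

end Labels

section Code

universe v

/-- Concatenating blocks of variable length: a cover by Bowen balls whose total weight is at most
one yields, for every `N`, a labelling which controls orbit segments of length `N`. -/
lemma exists_code [MetricSpace X] [MeasurableSpace X] {f : X → X} (hf : Measurable f) {χ : X → ℝ}
    {A : Type v} [Fintype A] {a : X → A} (ha : MeasurableFibers a) {n : A → ℕ}
    (hn : ∀ p, 0 < n p) {M : ℕ} (hM : ∀ p, n p ≤ M) {z : A → X} {ε o B : ℝ}
    (hd : ∀ y, ∀ i < n (a y), dist (f^[i] (z (a y))) (f^[i] y) ≤ ε)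
    (ho : ∀ x y, dist x y ≤ ε → |χ x - χ y| ≤ o) (hB : ∀ x, |χ x| ≤ B)
    (hZ : ∑ p, Real.exp (birkhoff f χ (n p) (z p)) ≤ 1) (N : ℕ) :
    ∃ (I : Type v) (_ : Fintype I) (c : X → I) (w : I → ℝ), MeasurableFibers c ∧
      (∀ i, 0 < w i) ∧ ∑ i, w i ≤ 1 ∧
      (∀ x y, c x = c y → ∀ i < N, dist (f^[i] x) (f^[i] y) ≤ 2 * ε) ∧
      (∀ y, birkhoff f χ N y ≤ Real.log (w (c y)) + N * o + M * B) ∧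
      (N = 0 → ∀ y, 0 ≤ Real.log (w (c y))) := by
  induction N using Nat.strong_induction_on with
  | _ N ih =>
  rcases isEmpty_or_nonempty X with hX | ⟨⟨x₀⟩⟩
  · exact ⟨PEmpty, inferInstance, isEmptyElim, isEmptyElim, fun i => i.elim, fun i => i.elim,
      by simp, isEmptyElim, isEmptyElim, fun _ => isEmptyElim⟩
  have hB0 : 0 ≤ B := (abs_nonneg _).trans (hB x₀)
  rcases Nat.eq_zero_or_pos N with rfl | hN
  · refine ⟨PUnit, inferInstance, fun _ => PUnit.unit, fun _ => 1, fun i => ?_, by simp, by simp,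
      by simp, fun y => ?_, by simp⟩
    · convert MeasurableSet.univ
      ext x
      simp
    · have : (0 : ℝ) ≤ M * B := by positivity
      simpa [birkhoff] using this
  have ih' := fun p => ih (N - n p) (by have := hn p; omega)
  choose I hI c w hc hw hw1 hcd hcw hc0 using ih'
  refine ⟨Σ p, I p, inferInstance, fun y => ⟨a y, c (a y) (f^[n (a y)] y)⟩,
    fun s => Real.exp (birkhoff f χ (n s.1) (z s.1)) * w s.1 s.2, ?_, ?_, ?_, ?_, ?_, ?_⟩
  · rintro ⟨p, i⟩
    have : (fun y => (⟨a y, c (a y) (f^[n (a y)] y)⟩ : Σ p, I p)) ⁻¹' {⟨p, i⟩} =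
        a ⁻¹' {p} ∩ f^[n p] ⁻¹' (c p ⁻¹' {i}) := by
      ext y
      simp only [mem_preimage, mem_singleton_iff, mem_inter_iff]
      constructor
      · rintro h
        obtain ⟨h1, h2⟩ := Sigma.mk.inj_iff.1 h
        subst h1
        exact ⟨rfl, eq_of_heq h2⟩
      · rintro ⟨rfl, rfl⟩
        rfl
    rw [this]
    exact (ha p).inter (hf.iterate _ (hc p i))
  · exact fun s => mul_pos (Real.exp_pos _) (hw _ _)
  · rw [Fintype.sum_sigma]
    refine le_trans (Finset.sum_le_sum fun p _ => ?_) hZ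
    simp only [← Finset.mul_sum]
    exact mul_le_of_le_one_right (Real.exp_pos _).le (hw1 p)
  · intro x y hxy i hi
    obtain ⟨h1, h2⟩ := Sigma.mk.inj_iff.1 hxy
    have hdx := hd x
    have hdy := hd y
    rw [← h1] at h2 hdy
    rcases lt_or_ge i (n (a x)) with hia | hia
    · have := dist_triangle_left (f^[i] x) (f^[i] y) (f^[i] (z (a x)))
      linarith [hdx i hia, hdy i hia]
    · have := hcd (a x) _ _ (eq_of_heq h2) (i - n (a x)) (by omega)
      simpa only [← Function.iterate_add_apply, Nat.sub_add_cancel hia] using this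
  · intro y
    rw [Real.log_mul (Real.exp_pos _).ne' (hw _ _).ne', Real.log_exp]
    rcases le_or_gt (n (a y)) N with h | h
    · have h1 := birkhoff_add_time f χ (n (a y)) (N - n (a y)) y
      rw [Nat.add_sub_cancel' h] at h1
      have h2 := abs_le.1 (birkhoff_le_of_close ho (hd y))
      have h3 := hcw (a y) (f^[n (a y)] y)
      rw [Nat.cast_sub h] at h3
      rw [h1]
      linarith [h2.1]
    · have h1 := birkhoff_add_time f χ N (n (a y) - N) (z (a y))
      rw [Nat.add_sub_cancel' h.le] at h1
      have h2 := abs_le.1 (birkhoff_le_of_close ho fun i hi => hd y i (hi.trans h))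
      have h3 := abs_le.1 (abs_birkhoff_le (f := f) hB (n (a y) - N) (f^[N] (z (a y))))
      have h4 := hc0 (a y) (by omega) (f^[n (a y)] y)
      have h5 : ((n (a y) - N : ℕ) : ℝ) * B ≤ M * B := by
        gcongr
        have := hM (a y)
        omega
      rw [h1]
      linarith [h2.1, h3.1]
  · exact fun h => absurd h hN.ne'

/-- The entropy bound resulting from a weighted labelling. -/
lemma labelEntropy_add_integral_le [MeasurableSpace X] {μ : Measure X} [IsProbabilityMeasure μ]
    {I : Type*} [Fintype I] {c : X → I} (hc : MeasurableFibers c) {w : I → ℝ}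
    (hw : ∀ i, 0 < w i) (hw1 : ∑ i, w i ≤ 1) {u : X → ℝ} (hu : Integrable u μ) {C : ℝ}
    (h : ∀ y, u y ≤ Real.log (w (c y)) + C) :
    labelEntropy μ c + ∫ y, u y ∂μ ≤ C := by
  have h1 : labelEntropy μ c ≤ _ := sum_negMulLog_le_of_weights (fun i => μ.real (c ⁻¹' {i})) w
    (fun _ => measureReal_nonneg) (fun i => (hw i).le) (fun i hi => absurd hi (hw i).ne')
    (sum_measureReal_fibers μ hc) hw1
  obtain ⟨hi, h2⟩ := integral_comp_fibers μ hc fun i => Real.log (w i)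
  have h3 := integral_mono hu (hi.add (integrable_const C)) h
  simp only [Pi.add_apply] at h3
  rw [integral_add hi (integrable_const C), h2] at h3
  simp only [integral_const, probReal_univ, one_smul] at h3
  linarith

end Code

section UpperBound

universe v

lemma dist_iterate_le_dynDist [MetricSpace X] (f : X → X) {n i : ℕ} (hi : i < n) (x y : X) :
    dist (f^[i] x) (f^[i] y) ≤ dynDist f n x y :=
  le_ciSup (f := fun i : Fin n => dist (f^[(i : ℕ)] x) (f^[(i : ℕ)] y))
    (Set.finite_range _).bddAbove ⟨i, hi⟩

lemma dynDist_le [MetricSpace X] {f : X → X} {n : ℕ} {x y : X} {ε : ℝ} (hε : 0 ≤ ε)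
    (h : ∀ i < n, dist (f^[i] x) (f^[i] y) ≤ ε) : dynDist f n x y ≤ ε :=
  Real.iSup_le (fun i => h i i.2) hε

lemma bddBelow_Qspan [MetricSpace X] (f : X → X) (φ ψ : X → ℝ) (T ε : ℝ) :
    BddBelow { r : ℝ | ∃ F : ℕ → Finset X,
    (∀ n ∈ STset f ψ T, IsSpanningSet f n ε (Xset f ψ T n) (F n)) ∧
    r = ∑' n : ℕ, Set.indicator (STset f ψ T)
        (fun n => ∑ x ∈ F n, Real.exp (birkhoff f φ n x)) n } := by
  refine ⟨0, ?_⟩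
  rintro r ⟨F, -, rfl⟩
  exact tsum_nonneg fun n => Set.indicator_nonneg
    (fun n _ => Finset.sum_nonneg fun x _ => (Real.exp_pos _).le) n

variable [MetricSpace X] [CompactSpace X]

lemma exists_abs_le {χ : X → ℝ} (hχ : Continuous χ) : ∃ B : ℝ, 0 < B ∧ ∀ x, |χ x| ≤ B := by
  obtain ⟨B, hB⟩ := isCompact_univ.exists_bound_of_continuousOn hχ.continuousOn
  exact ⟨max B 1, by positivity, fun x => (hB x (mem_univ x)).trans (le_max_left _ _)⟩

lemma exists_pos_le {ψ : X → ℝ} (hψ : Continuous ψ) (hpos : ∀ x, 0 < ψ x) :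
    ∃ m : ℝ, 0 < m ∧ ∀ x, m ≤ ψ x := by
  obtain ⟨m, hm, h⟩ := isCompact_univ.exists_forall_le' hψ.continuousOn fun x _ => hpos x
  exact ⟨m, hm, fun x => h x (mem_univ x)⟩

lemma exists_modulus {χ : X → ℝ} (hχ : Continuous χ) {o : ℝ} (ho : 0 < o) :
    ∃ ε > 0, ∀ x y, dist x y ≤ ε → |χ x - χ y| ≤ o := by
  obtain ⟨δ, hδ, h⟩ := Metric.uniformContinuous_iff.1
    (CompactSpace.uniformContinuous_of_continuous hχ) o ho
  refine ⟨δ / 2, by positivity, fun x y hxy => ?_⟩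
  have := h (a := x) (b := y) (by linarith)
  exact this.le

variable [MeasurableSpace X] [BorelSpace X]

lemma integrable_of_continuous {χ : X → ℝ} (hχ : Continuous χ) (μ : Measure X)
    [IsFiniteMeasure μ] : Integrable χ μ :=
  hχ.integrable_of_hasCompactSupport (HasCompactSupport.of_compactSpace χ)

lemma exists_spanning (f : X → X) {ε : ℝ} (hε : 0 < ε) (n : ℕ) :
    ∃ F : Finset X, ∀ y, ∃ x ∈ F, dynDist f n x y ≤ ε := by
  classical
  obtain ⟨k, q, -, hqd, -⟩ := exists_fine_label (0 : Measure X) hε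
  rcases isEmpty_or_nonempty X with hX | hX
  · exact ⟨∅, isEmptyElim⟩
  refine ⟨Finset.univ.image (Function.invFun (itinerary f q 0 n)), fun y =>
    ⟨_, Finset.mem_image_of_mem _ (Finset.mem_univ (itinerary f q 0 n y)),
      dynDist_le hε.le fun i hi => hqd _ _ ?_⟩⟩
  have := congrFun (Function.invFun_eq (f := itinerary f q 0 n) ⟨y, rfl⟩) ⟨i, hi⟩
  simpa only [itinerary, zero_add] using this

lemma exists_lt_of_Qspan_lt (f : X → X) (φ ψ : X → ℝ) (T : ℝ) {ε : ℝ} (hε : 0 < ε) {b : ℝ}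
    (hQ : Qspan f φ ψ T ε < b) :
    ∃ F : ℕ → Finset X, (∀ n ∈ STset f ψ T, IsSpanningSet f n ε (Xset f ψ T n) (F n)) ∧
      ∑' n : ℕ, Set.indicator (STset f ψ T)
        (fun n => ∑ x ∈ F n, Real.exp (birkhoff f φ n x)) n < b := by
  choose F hF using exists_spanning f hε
  obtain ⟨r, ⟨G, hG, rfl⟩, hr⟩ := exists_lt_of_csInf_lt
    (by exact ⟨_, F, fun n _ y _ => hF n y, rfl⟩) hQ
  exact ⟨G, hG, hr⟩

/-- Below the induced pressure parameter there are covers by Bowen balls of total weight at most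
one for the potential `φ - β ψ`. -/
lemma exists_cover_of_inducedPressure_lt {X : Type v} [MetricSpace X] [CompactSpace X]
    [MeasurableSpace X] [BorelSpace X] {f : X → X} (hf : Continuous f) {φ ψ : X → ℝ}
    (hψ : Continuous ψ) (hpos : ∀ x, 0 < ψ x) {β : ℝ} (hβ : inducedPressure f φ ψ < β) {ε₀ : ℝ}
    (hε₀ : 0 < ε₀) :
    ∃ (A : Type v) (_ : Fintype A) (a : X → A) (n : A → ℕ) (z : A → X), MeasurableFibers a ∧
      (∀ p, 0 < n p) ∧ (∀ y, ∀ i < n (a y), dist (f^[i] (z (a y))) (f^[i] y) ≤ ε₀) ∧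
      ∑ p, Real.exp (birkhoff f (fun x => φ x - β * ψ x) (n p) (z p)) ≤ 1 := by
  classical
  obtain ⟨β', hPβ', hβ'β⟩ := EReal.exists_between_coe_real hβ
  have hγ : 0 < β - β' := sub_pos.2 (by exact_mod_cast hβ'β)
  obtain ⟨m, hm, hmψ⟩ := exists_pos_le hψ hpos
  obtain ⟨B, hB0, hB⟩ := exists_abs_le hψ
  obtain ⟨ε₁, hε₁, hmod⟩ := exists_modulus hψ
    (show 0 < (β - β') * m / (2 * (|β| + 1)) by positivity)
  set κ := (β - β') * m / (2 * (|β| + 1)) with hκ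
  have hκ0 : 0 < κ := by positivity
  have hκβ : |β| * κ / m ≤ (β - β') / 2 := by
    rw [hκ, div_le_iff₀ hm, mul_div_assoc', div_le_iff₀ (by positivity)]
    nlinarith [abs_nonneg β, mul_pos hγ hm]
  set ε := min ε₀ ε₁
  have hε : 0 < ε := lt_min hε₀ hε₁
  have hlim : Filter.limsup (fun T : ℝ => ((T⁻¹ * Real.log (Qspan f φ ψ T ε) : ℝ) : EReal)) atTop
      < β' := lt_of_le_of_lt
    (le_iSup₂ (f := fun (ε : ℝ) (_ : 0 < ε) => Filter.limsup
      (fun T : ℝ => ((T⁻¹ * Real.log (Qspan f φ ψ T ε) : ℝ) : EReal)) atTop) ε hε) hPβ'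
  obtain ⟨T, hTQ, hTB, hTβ⟩ := ((eventually_lt_of_limsup_lt hlim).and
    ((eventually_ge_atTop B).and (eventually_ge_atTop (2 * (|β| * B) / (β - β'))))).exists
  have hT : 0 < T := hB0.trans_le hTB
  have hQ : Qspan f φ ψ T ε < Real.exp (β' * T) := by
    rcases le_or_gt (Qspan f φ ψ T ε) 0 with h | h
    · exact h.trans_lt (Real.exp_pos _)
    · rw [EReal.coe_lt_coe_iff, inv_mul_lt_iff₀ hT] at hTQ
      rw [← Real.log_lt_iff_lt_exp h]
      linarith
  obtain ⟨F, hF, hsum⟩ := exists_lt_of_Qspan_lt f φ ψ T hε hQ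
  rw [tsum_indicator_STset hm hmψ] at hsum
  set S := (Finset.range (⌊T / m⌋₊ + 1)).filter (· ∈ STset f ψ T) with hS
  let Bow : (Σ _ : ℕ, X) → Set X := fun p =>
    Xset f ψ T p.1 ∩ {y | ∀ i < p.1, dist (f^[i] p.2) (f^[i] y) ≤ ε}
  have hBow : ∀ p, MeasurableSet (Bow p) := by
    intro p
    refine MeasurableSet.inter (MeasurableSet.inter ?_ ?_) (IsClosed.measurableSet ?_)
    · exact measurableSet_le (continuous_birkhoff hf hψ _).measurable measurable_const
    · exact measurableSet_lt measurable_const (continuous_birkhoff hf hψ _).measurable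
    · have : {y | ∀ i < p.1, dist (f^[i] p.2) (f^[i] y) ≤ ε} =
          ⋂ i, ⋂ (_ : i < p.1), {y | dist (f^[i] p.2) (f^[i] y) ≤ ε} := by
        ext y
        simp
      rw [this]
      exact isClosed_iInter fun i => isClosed_iInter fun _ =>
        isClosed_le (continuous_const.dist (hf.iterate i)) continuous_const
  let G : Finset (Σ _ : ℕ, X) := (S.sigma F).filter fun p => (Bow p).Nonempty
  obtain ⟨a, ha, haB⟩ := exists_label_of_cover (fun p : G => Bow p.1) (fun p => hBow p.1) (by
    intro y
    obtain ⟨n, hn⟩ := exists_mem_Xset hm hmψ hT.le y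
    have hnS := mem_STset hn
    obtain ⟨x, hx, hxy⟩ := hF n hnS y hn
    have hy : y ∈ Bow ⟨n, x⟩ := ⟨hn, fun i hi => (dist_iterate_le_dynDist f hi x y).trans hxy⟩
    refine ⟨⟨⟨n, x⟩, ?_⟩, hy⟩
    simp only [G, S, Finset.mem_filter, Finset.mem_sigma, Finset.mem_range]
    exact ⟨⟨⟨Nat.lt_succ_of_le (le_floor_of_mem_STset hm hmψ hnS), hnS⟩, hx⟩, y, hy⟩)
  refine ⟨G, inferInstance, a, fun p => p.1.1, fun p => p.1.2, ha, ?_, ?_, ?_⟩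
  · rintro ⟨p, hp⟩
    obtain ⟨y, ⟨-, hy⟩, -⟩ := (Finset.mem_filter.1 hp).2
    refine Nat.pos_of_ne_zero fun h0 => ?_
    have h1 := (abs_le.1 (abs_birkhoff_le (f := f) hB (p.1 + 1) y)).2
    simp only at h0
    rw [h0] at h1 hy
    simp only [zero_add, Nat.cast_one, one_mul] at h1 hy
    linarith
  · exact fun y i hi => ((haB y).2 i hi).trans (min_le_left _ _)
  · set D := Real.exp (-β * T + |β| * B + |β| * κ / m * T) with hD
    have hterm : ∀ p ∈ G, Real.exp (birkhoff f (fun x => φ x - β * ψ x) p.1 p.2) ≤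
        D * Real.exp (birkhoff f φ p.1 p.2) := by
      intro p hp
      obtain ⟨y, ⟨hy1, hy2⟩, hyd⟩ := (Finset.mem_filter.1 hp).2
      have hpS : p.1 ∈ STset f ψ T := ⟨y, hy1, hy2⟩
      have hpn : (p.1 : ℝ) ≤ T / m :=
        (Nat.cast_le.2 (le_floor_of_mem_STset hm hmψ hpS)).trans (Nat.floor_le (by positivity))
      have h1 := abs_le.1 (birkhoff_le_of_close (f := f) (χ := ψ) (ε := ε)
        (fun x y hxy => hmod x y (hxy.trans (min_le_right _ _))) hyd)
      have h2 := birkhoff_add_time f ψ p.1 1 y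
      have h3 := abs_le.1 (abs_birkhoff_le (f := f) hB 1 (f^[p.1] y))
      have h4 : (p.1 : ℝ) * κ ≤ T / m * κ := by gcongr
      have h5 : |birkhoff f ψ p.1 p.2 - T| ≤ B + T / m * κ := by
        rw [abs_le]
        simp only [Nat.cast_one, one_mul] at h3
        constructor <;> linarith [h1.1, h1.2, h3.2]
      have h6 := abs_le.1 ((abs_mul β _).trans_le (mul_le_mul_of_nonneg_left h5 (abs_nonneg β)))
      rw [hD, ← Real.exp_add, birkhoff_sub_const_mul]
      refine Real.exp_le_exp.2 ?_
      have h7 : |β| * (B + T / m * κ) = |β| * B + |β| * κ / m * T := by ring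
      linarith [h6.1]
    have hsum' : ∑ p ∈ G, Real.exp (birkhoff f (fun x => φ x - β * ψ x) p.1 p.2) ≤
        D * Real.exp (β' * T) := by
      refine (Finset.sum_le_sum hterm).trans ?_
      rw [← Finset.mul_sum]
      refine mul_le_mul_of_nonneg_left ?_ (Real.exp_pos _).le
      refine (Finset.sum_le_sum_of_subset_of_nonneg (Finset.filter_subset _ _)
        fun _ _ _ => (Real.exp_pos _).le).trans ?_
      rw [Finset.sum_sigma]
      exact hsum.le
    rw [Finset.sum_coe_sort G
      fun p => Real.exp (birkhoff f (fun x => φ x - β * ψ x) p.1 p.2)]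
    refine hsum'.trans ?_
    rw [hD, ← Real.exp_add, Real.exp_le_one_iff]
    rw [div_le_iff₀ hγ] at hTβ
    have h8 := mul_le_mul_of_nonneg_right hκβ hT.le
    linarith

/-- The upper bound in the variational principle. -/
lemma ksEntropy_le_of_inducedPressure_lt {X : Type v} [MetricSpace X] [CompactSpace X]
    [MeasurableSpace X] [BorelSpace X] {f : X → X} (hf : Continuous f) {φ ψ : X → ℝ}
    (hφ : Continuous φ) (hψ : Continuous ψ) (hpos : ∀ x, 0 < ψ x) {β : ℝ}
    (hβ : inducedPressure f φ ψ < β) {μ : Measure X} [IsProbabilityMeasure μ]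
    (hμ : MeasurePreserving f μ μ) :
    ksEntropy μ f ≤ (β * ∫ x, ψ x ∂μ - ∫ x, φ x ∂μ : ℝ) := by
  refine ksEntropy_le μ f _ fun k r hr η hη => ?_
  set χ : X → ℝ := fun x => φ x - β * ψ x with hχ
  have hχc : Continuous χ := hφ.sub (continuous_const.mul hψ)
  obtain ⟨δ, hδ, hent⟩ := exists_labelEntropy_itinerary_le hμ hr (show 0 < η / 3 by positivity)
  obtain ⟨ε₁, hε₁, hmod⟩ := exists_modulus hχc (show 0 < η / 3 by positivity)
  obtain ⟨B, hB0, hB⟩ := exists_abs_le hχc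
  have hε : 0 < min ε₁ (δ / 3) := by positivity
  obtain ⟨A, _, a, n, z, ha, hn, hd, hZ⟩ :=
    exists_cover_of_inducedPressure_lt hf hψ hpos hβ hε
  obtain ⟨M, hM⟩ : ∃ M, ∀ p, n p ≤ M :=
    ⟨Finset.univ.sup n, fun p => Finset.le_sup (Finset.mem_univ p)⟩
  obtain ⟨N, hN⟩ := exists_nat_ge (M * B / (η / 3))
  rw [div_le_iff₀ (by positivity)] at hN
  refine ⟨N, ?_⟩
  obtain ⟨I, _, c, w, hc, hw, hw1, hcd, hcw, -⟩ := exists_code hf.measurable ha hn hM hd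
    (fun x y hxy => hmod x y (hxy.trans (min_le_left _ _))) hB hZ (N + 1)
  have h1 := hent (N + 1) I c hc fun x y hxy i hi =>
    (hcd x y hxy i hi).trans_lt (by linarith [min_le_right ε₁ (δ / 3)])
  have h2 := labelEntropy_add_integral_le (μ := μ) hc hw hw1
    (integrable_of_continuous (continuous_birkhoff hf hχc (N + 1)) μ)
    (C := (N + 1 : ℕ) * (η / 3) + M * B) (fun y => by linarith [hcw y])
  have hφi := integrable_of_continuous hφ μ
  have hψi := integrable_of_continuous hψ μ
  rw [integral_birkhoff hμ (integrable_of_continuous hχc μ), hχ,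
    integral_sub hφi (hψi.const_mul β), integral_const_mul] at h2
  push_cast at h1 h2
  linarith

end UpperBound

section WeakLimits

variable [MetricSpace X] [MeasurableSpace X] [BorelSpace X] {ι : Type*}
  {L : Filter ι} {μs : ι → ProbabilityMeasure X} {μ : ProbabilityMeasure X}

lemma tendsto_labelEntropy_itinerary (hμs : Tendsto μs L (𝓝 μ)) {f : X → X} (hf : Continuous f)
    (hμ : MeasurePreserving f (μ : Measure X) (μ : Measure X)) {k : ℕ} {q : X → Fin k}
    (hqν : ∀ i, (μ : Measure X) (frontier (q ⁻¹' {i})) = 0) (m : ℕ) :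
    Tendsto (fun t => labelEntropy (μs t : Measure X) (itinerary f q 0 m)) L
      (𝓝 (labelEntropy (μ : Measure X) (itinerary f q 0 m))) := by
  refine tendsto_finsetSum _ fun w _ => (Real.continuous_negMulLog.tendsto _).comp
    ((ENNReal.tendsto_toReal (measure_ne_top _ _)).comp
      (ProbabilityMeasure.tendsto_measure_of_null_frontier_of_tendsto' hμs ?_))
  have : itinerary f q 0 m ⁻¹' {w} = ⋂ i : Fin m, f^[i] ⁻¹' (q ⁻¹' {w i}) := by
    ext x
    simp [itinerary, funext_iff]
  rw [this]
  refine measure_mono_null (frontier_iInter_subset_of_finite _) (measure_iUnion_null fun i => ?_)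
  refine measure_mono_null ((hf.iterate i).frontier_preimage_subset _) ?_
  have hm := hμ.iterate i
  rw [hm.measure_preimage isClosed_frontier.measurableSet.nullMeasurableSet]
  exact hqν _

variable [CompactSpace X]

lemma tendsto_integral_of_tendsto (hμs : Tendsto μs L (𝓝 μ)) {χ : X → ℝ} (hχ : Continuous χ) :
    Tendsto (fun t => ∫ x, χ x ∂(μs t : Measure X)) L (𝓝 (∫ x, χ x ∂(μ : Measure X))) :=
  ProbabilityMeasure.tendsto_iff_forall_integral_tendsto.1 hμs
    (BoundedContinuousFunction.mkOfCompact ⟨χ, hχ⟩)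

lemma measurePreserving_of_tendsto [L.NeBot] {f : X → X} (hf : Continuous f)
    (hμs : Tendsto μs L (𝓝 μ))
    (h : ∀ χ : X → ℝ, Continuous χ → Tendsto
      (fun t => ∫ x, χ (f x) ∂(μs t : Measure X) - ∫ x, χ x ∂(μs t : Measure X)) L (𝓝 0)) :
    MeasurePreserving f (μ : Measure X) (μ : Measure X) := by
  refine ⟨hf.measurable, ?_⟩
  have : IsProbabilityMeasure ((μ : Measure X).map f) :=
    Measure.isProbabilityMeasure_map hf.measurable.aemeasurable
  refine ext_of_forall_integral_eq_of_IsFiniteMeasure fun χ => ?_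
  rw [integral_map hf.measurable.aemeasurable χ.continuous.aestronglyMeasurable]
  have h1 := (tendsto_integral_of_tendsto hμs (χ.continuous.comp hf)).sub
    (tendsto_integral_of_tendsto hμs χ.continuous)
  exact sub_eq_zero.1 (tendsto_nhds_unique h1 (h χ χ.continuous))

lemma le_ksEntropy_of_tendsto [L.NeBot] {f : X → X} (hf : Continuous f) {φ ψ : X → ℝ}
    (hφ : Continuous φ) (hψ : Continuous ψ)
    (hμs : Tendsto μs L (𝓝 μ)) (hμ : MeasurePreserving f (μ : Measure X) (μ : Measure X))
    {k : ℕ} {q : X → Fin k} (hq : MeasurableFibers q)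
    (hqν : ∀ i, (μ : Measure X) (frontier (q ⁻¹' {i})) = 0) (c : ℝ) {e : ℕ → ι → ℝ}
    (he : ∀ m, Tendsto (e m) L (𝓝 0))
    (h : ∀ m : ℕ, 0 < m → ∀ᶠ t in L, c * ∫ x, ψ x ∂(μs t : Measure X) ≤
      (m : ℝ)⁻¹ * labelEntropy (μs t : Measure X) (itinerary f q 0 m) +
        ∫ x, φ x ∂(μs t : Measure X) + e m t) :
    ((c * ∫ x, ψ x ∂(μ : Measure X) - ∫ x, φ x ∂(μ : Measure X) : ℝ) : EReal) ≤
      ksEntropy (μ : Measure X) f := by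
  refine le_ksEntropy _ f _ hq fun n => ?_
  have h1 := le_of_tendsto_of_tendsto ((tendsto_integral_of_tendsto hμs hψ).const_mul c)
    ((((tendsto_labelEntropy_itinerary hμs hf hμ hqν (n + 1)).const_mul
      ((n + 1 : ℕ) : ℝ)⁻¹).add (tendsto_integral_of_tendsto hμs hφ)).add (he (n + 1)))
    (h (n + 1) n.succ_pos)
  rw [add_zero, ← sub_le_iff_le_add, le_inv_mul_iff₀ (by positivity)] at h1
  push_cast at h1
  exact h1

/-- The superlevel sets of `μ ↦ h_μ(f) + ∫ φ dμ - c ∫ ψ dμ` on the invariant measures are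
closed. -/
lemma isClosed_setOf_le_ksEntropy {f : X → X} {ε : ℝ} (hε : 0 < ε)
    (hexp : ∀ x y : X, (∀ n : ℕ, dist (f^[n] x) (f^[n] y) < ε) → x = y) (hf : Continuous f)
    {φ ψ : X → ℝ} (hφ : Continuous φ) (hψ : Continuous ψ) (c : ℝ) :
    IsClosed {μ : ProbabilityMeasure X | MeasurePreserving f (μ : Measure X) (μ : Measure X) ∧
      ((c * ∫ x, ψ x ∂(μ : Measure X) - ∫ x, φ x ∂(μ : Measure X) : ℝ) : EReal) ≤
        ksEntropy (μ : Measure X) f} := by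
  rw [isClosed_iff_ultrafilter]
  intro μ u hu hmem
  have hu' : Tendsto id (u : Filter (ProbabilityMeasure X)) (𝓝 μ) := hu
  have hμ : MeasurePreserving f (μ : Measure X) (μ : Measure X) := by
    refine measurePreserving_of_tendsto hf hu' fun χ hχ => ?_
    refine tendsto_const_nhds.congr' ?_
    filter_upwards [hmem] with ν hν
    have := integral_map (μ := (ν : Measure X)) hf.measurable.aemeasurable
      (hχ.aestronglyMeasurable (μ := (ν : Measure X).map f))
    rw [hν.1.map_eq] at this
    simp [this]
  obtain ⟨k, q, hq, hqd, hqν⟩ := exists_fine_label (μ : Measure X) (half_pos hε)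
  refine ⟨hμ, le_ksEntropy_of_tendsto (e := fun _ _ => 0) hf hφ hψ hu' hμ hq hqν c
    (fun _ => tendsto_const_nhds) fun m hm => ?_⟩
  filter_upwards [hmem] with ν hν
  have := EReal.coe_le_coe_iff.1
    (hν.2.trans (ksEntropy_le_of_expansive hexp hf (half_lt_self hε) hν.1 hq hqd hm))
  simp only [id]
  linarith

end WeakLimits

section EmpiricalMeasures

lemma exists_separated_spanning [MetricSpace X] [CompactSpace X] [MeasurableSpace X]
    [BorelSpace X] (f : X → X) {ε : ℝ} (hε : 0 < ε) (n : ℕ) (Z : Set X) :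
    ∃ E : Finset X, (E : Set X) ⊆ Z ∧ IsSeparatedSet f n ε E ∧ IsSpanningSet f n ε Z E := by
  classical
  obtain ⟨k, q, -, hqd, -⟩ := exists_fine_label (0 : Measure X) hε
  let C : Set ℕ := {c | ∃ E : Finset X, (E : Set X) ⊆ Z ∧ IsSeparatedSet f n ε E ∧ E.card = c}
  have hne : C.Nonempty := ⟨0, ∅, by simp, by simp [IsSeparatedSet], rfl⟩
  have hbdd : BddAbove C := by
    refine ⟨Fintype.card (Fin n → Fin k), ?_⟩
    rintro _ ⟨E, -, hE, rfl⟩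
    refine Finset.card_le_card_of_injOn (itinerary f q 0 n) (fun _ _ => Finset.mem_univ _) ?_
    intro x hx y hy hxy
    by_contra hne
    refine (hE x hx y hy hne).not_ge (dynDist_le hε.le fun i hi => hqd _ _ ?_)
    simpa only [itinerary, zero_add] using congrFun hxy ⟨i, hi⟩
  obtain ⟨E, hEZ, hE, hEC⟩ := Nat.sSup_mem hne hbdd
  refine ⟨E, hEZ, hE, fun y hy => ?_⟩
  by_contra! hcon
  have hyE : y ∉ E := fun h => by
    refine (hcon y h).not_ge (dynDist_le hε.le fun i _ => ?_)
    rw [dist_self]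
    exact hε.le
  have hsymm : ∀ x y : X, dynDist f n x y = dynDist f n y x := fun x y => by
    simp only [dynDist, dist_comm]
  have hmem : E.card + 1 ∈ C := by
    refine ⟨insert y E, ?_, ?_, Finset.card_insert_of_notMem hyE⟩
    · rw [Finset.coe_insert]
      exact Set.insert_subset hy hEZ
    · intro a ha b hb hab
      rcases Finset.mem_insert.1 ha with rfl | ha' <;>
        rcases Finset.mem_insert.1 hb with rfl | hb'
      · exact absurd rfl hab
      · rw [hsymm]
        exact hcon b hb'
      · exact hcon a ha'
      · exact hE a ha' b hb' hab
  have := le_csSup hbdd hmem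
  omega

/-- The Gibbs measure on a finite set `E` with energies `w`. -/
lemma exists_gibbs [MeasurableSpace X] {E : Finset X} (hE : E.Nonempty) (w : X → ℝ) :
    ∃ σ : Measure X, IsProbabilityMeasure σ ∧
      (∀ χ : X → ℝ, StronglyMeasurable χ → ∫ x, χ x ∂σ =
        ∑ x ∈ E, Real.exp (w x) / (∑ y ∈ E, Real.exp (w y)) * χ x) ∧
      ∀ (ι : Type) [Fintype ι] (g : X → ι), MeasurableFibers g → Set.InjOn g E →
        labelEntropy σ g = Real.log (∑ y ∈ E, Real.exp (w y)) -
          ∑ x ∈ E, Real.exp (w x) / (∑ y ∈ E, Real.exp (w y)) * w x := by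
  classical
  set Z := ∑ y ∈ E, Real.exp (w y)
  have hZ : 0 < Z := Finset.sum_pos (fun x _ => Real.exp_pos _) hE
  set p : X → ℝ := fun x => Real.exp (w x) / Z
  have hp : ∀ x, 0 < p x := fun x => div_pos (Real.exp_pos _) hZ
  have hp1 : ∑ x ∈ E, p x = 1 := by
    simp only [p, ← Finset.sum_div]
    exact div_self hZ.ne'
  set σ : Measure X := ∑ x ∈ E, ENNReal.ofReal (p x) • Measure.dirac x
  have hσ : ∀ s, MeasurableSet s → σ s = ENNReal.ofReal (∑ x ∈ E, if x ∈ s then p x else 0) := by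
    intro s hs
    rw [ENNReal.ofReal_sum_of_nonneg fun x _ => by split_ifs <;> simp [(hp x).le]]
    simp only [σ, Measure.coe_finsetSum, Finset.sum_apply, Measure.smul_apply, smul_eq_mul,
      Measure.dirac_apply' _ hs]
    refine Finset.sum_congr rfl fun x _ => ?_
    by_cases hx : x ∈ s <;> simp [hx]
  have hprob : IsProbabilityMeasure σ := ⟨by simp [hσ _ MeasurableSet.univ, hp1]⟩
  refine ⟨σ, hprob, fun χ hχ => ?_, fun ι _ g hg hinj => ?_⟩
  · rw [integral_finsetSum_measure fun x _ =>
      ((integrable_dirac' hχ (by simp)).smul_measure ENNReal.ofReal_ne_top)]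
    refine Finset.sum_congr rfl fun x _ => ?_
    rw [integral_smul_measure, integral_dirac' _ _ hχ, ENNReal.toReal_ofReal (hp x).le, smul_eq_mul]
  · have hreal : ∀ i, σ.real (g ⁻¹' {i}) = ∑ x ∈ E, if g x = i then p x else 0 := by
      intro i
      rw [measureReal_def, hσ _ (hg i), ENNReal.toReal_ofReal]
      · rfl
      · exact Finset.sum_nonneg fun x _ => by split_ifs <;> simp [(hp x).le]
    have h0 : ∀ i, i ∉ E.image g → Real.negMulLog (σ.real (g ⁻¹' {i})) = 0 := by
      intro i hi
      rw [hreal, Finset.sum_eq_zero, Real.negMulLog_zero]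
      intro x hx
      rw [if_neg]
      rintro rfl
      exact hi (Finset.mem_image_of_mem g hx)
    rw [labelEntropy, ← Finset.sum_subset (Finset.subset_univ (E.image g)) fun i _ => h0 i,
      Finset.sum_image hinj, ← one_mul (Real.log Z), ← hp1, Finset.sum_mul,
      ← Finset.sum_sub_distrib]
    refine Finset.sum_congr rfl fun x hx => ?_
    rw [hreal, Finset.sum_eq_single x]
    · rw [if_pos rfl, Real.negMulLog, Real.log_div (Real.exp_pos _).ne' hZ.ne', Real.log_exp]
      ring
    · intro y hy hyx
      rw [if_neg fun h => hyx (hinj hy hx h)]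
    · exact fun h => absurd hx h

/-- Averages of a measure along the first `n` iterates. -/
lemma exists_orbit_average [MeasurableSpace X] {f : X → X} (hf : Measurable f) (σ : Measure X)
    [IsProbabilityMeasure σ] {n : ℕ} (hn : 0 < n) :
    ∃ μ : ProbabilityMeasure X,
      (∀ (χ : X → ℝ) (B : ℝ), Measurable χ → (∀ x, |χ x| ≤ B) →
        ∫ x, χ x ∂(μ : Measure X) = (n : ℝ)⁻¹ * ∫ x, birkhoff f χ n x ∂σ) ∧
      ∀ (ι : Type) [Fintype ι] (g : X → ι), MeasurableFibers g →
        ∑ i ∈ Finset.range n, labelEntropy σ (fun x => g (f^[i] x)) ≤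
          n * labelEntropy (μ : Measure X) g := by
  have hn0 : (0 : ℝ) < n := by exact_mod_cast hn
  set ν : Measure X := ENNReal.ofReal (n : ℝ)⁻¹ • ∑ i ∈ Finset.range n, σ.map f^[i]
  have hmap : ∀ i, IsProbabilityMeasure (σ.map f^[i]) := fun i =>
    Measure.isProbabilityMeasure_map (hf.iterate i).aemeasurable
  have hprob : IsProbabilityMeasure ν := by
    refine ⟨?_⟩
    simp only [ν, Measure.smul_apply, Measure.coe_finsetSum, Finset.sum_apply, measure_univ,
      Finset.sum_const, Finset.card_range, nsmul_eq_mul, mul_one, smul_eq_mul]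
    rw [← ENNReal.ofReal_natCast, ← ENNReal.ofReal_mul (by positivity), inv_mul_cancel₀ hn0.ne',
      ENNReal.ofReal_one]
  have hreal : ∀ s, ν.real s = ∑ i ∈ Finset.range n, (n : ℝ)⁻¹ * (σ.map f^[i]).real s := by
    intro s
    simp only [ν, measureReal_def, Measure.smul_apply, Measure.coe_finsetSum, Finset.sum_apply,
      smul_eq_mul, ENNReal.toReal_mul]
    rw [ENNReal.toReal_ofReal (by positivity), ENNReal.toReal_sum fun i _ => measure_ne_top _ _,
      Finset.mul_sum]
  refine ⟨⟨ν, hprob⟩, fun χ B hχ hB => ?_, fun ι _ g hg => ?_⟩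
  · have hint : ∀ (τ : Measure X) [IsProbabilityMeasure τ], Integrable χ τ := fun τ _ =>
      Integrable.of_bound hχ.aestronglyMeasurable B (Eventually.of_forall hB)
    change ∫ x, χ x ∂ν = _
    rw [integral_smul_measure, integral_finsetSum_measure fun i _ => hint _,
      ENNReal.toReal_ofReal (by positivity), smul_eq_mul]
    congr 1
    simp only [birkhoff]
    rw [integral_finsetSum]
    · exact Finset.sum_congr rfl fun i _ =>
        integral_map (hf.iterate i).aemeasurable hχ.aestronglyMeasurable
    · exact fun i _ => Integrable.of_bound (hχ.comp (hf.iterate i)).aestronglyMeasurable B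
        (Eventually.of_forall fun x => hB _)
  · rw [← inv_mul_le_iff₀ hn0, labelEntropy]
    change _ ≤ ∑ i, Real.negMulLog (ν.real (g ⁻¹' {i}))
    have h1 : ∑ i ∈ Finset.range n, labelEntropy σ (fun x => g (f^[i] x)) =
        ∑ j, ∑ i ∈ Finset.range n, Real.negMulLog ((σ.map f^[i]).real (g ⁻¹' {j})) := by
      rw [Finset.sum_comm]
      exact Finset.sum_congr rfl fun i _ => (labelEntropy_map σ hg (hf.iterate i)).symm
    rw [h1, Finset.mul_sum]
    refine Finset.sum_le_sum fun j _ => ?_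
    have h2 := Real.concaveOn_negMulLog.le_map_sum (t := Finset.range n)
      (w := fun _ => (n : ℝ)⁻¹) (p := fun i => (σ.map f^[i]).real (g ⁻¹' {j}))
      (fun _ _ => by positivity) (by simp [hn0.ne']) fun i _ => measureReal_nonneg
    simp only [smul_eq_mul] at h2
    rw [hreal, Finset.mul_sum]
    exact h2

end EmpiricalMeasures

section Existence

variable [MetricSpace X] [CompactSpace X] [MeasurableSpace X] [BorelSpace X]

/-- Empirical measures along separated sets: nearly invariant measures whose block entropies
control the partition sum. -/
lemma exists_empirical {f : X → X} (hf : Continuous f) {φ : X → ℝ} (hφ : Continuous φ) {n : ℕ}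
    (hn : 0 < n) {ε : ℝ} {E : Finset X} (hne : E.Nonempty) (hE : IsSeparatedSet f n ε E)
    (hε : 0 < ε) :
    ∃ μ : ProbabilityMeasure X,
      (∀ χ : X → ℝ, Continuous χ → ∀ a b, (∀ x ∈ E, birkhoff f χ n x ∈ Icc a b) →
        n * ∫ x, χ x ∂(μ : Measure X) ∈ Icc a b) ∧
      ∀ (k : ℕ) (q : X → Fin k), MeasurableFibers q → (∀ x y, q x = q y → dist x y ≤ ε) →
        ∀ m : ℕ, 0 < m → Real.log (∑ x ∈ E, Real.exp (birkhoff f φ n x)) ≤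
          (m : ℝ)⁻¹ * (n * labelEntropy (μ : Measure X) (itinerary f q 0 m)) +
            n * ∫ x, φ x ∂(μ : Measure X) + 2 * m * Real.log k := by
  have hn0 : (0 : ℝ) < n := by exact_mod_cast hn
  obtain ⟨σ, hσ, hσint, hσent⟩ := exists_gibbs hne (birkhoff f φ n)
  obtain ⟨μ, hμint, hμent⟩ := exists_orbit_average hf.measurable σ hn
  set Z := ∑ x ∈ E, Real.exp (birkhoff f φ n x) with hZdef
  have hZ : 0 < Z := Finset.sum_pos (fun x _ => Real.exp_pos _) hne
  have hint : ∀ χ : X → ℝ, Continuous χ → n * ∫ x, χ x ∂(μ : Measure X) =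
      ∑ x ∈ E, Real.exp (birkhoff f φ n x) / Z * birkhoff f χ n x := by
    intro χ hχ
    obtain ⟨B, -, hB⟩ := exists_abs_le hχ
    rw [hμint χ B hχ.measurable hB, mul_inv_cancel_left₀ hn0.ne',
      hσint _ (continuous_birkhoff hf hχ n).stronglyMeasurable]
  have hp1 : ∑ x ∈ E, Real.exp (birkhoff f φ n x) / Z = 1 := by
    rw [← Finset.sum_div]
    exact div_self hZ.ne'
  refine ⟨μ, fun χ hχ a b hab => ?_, fun k q hq hqd m hm => ?_⟩
  · rw [hint χ hχ]
    exact (convex_Icc a b).sum_mem (fun x _ => by positivity) hp1 hab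
  · have hinj : Set.InjOn (itinerary f q 0 n) E := by
      intro x hx y hy hxy
      by_contra hne
      refine (hE x hx y hy hne).not_ge (dynDist_le hε.le fun i hi => hqd _ _ ?_)
      simpa only [itinerary, zero_add] using congrFun hxy ⟨i, hi⟩
    have h1 := hσent _ _ (hq.itinerary hf.measurable 0 n) hinj
    have h2 := mul_labelEntropy_itinerary_le σ hf.measurable hq hm n
    have h3 := hμent _ _ (hq.itinerary hf.measurable 0 m)
    simp only [itinerary_iterate, add_zero] at h3
    rw [← hint φ hφ] at h1
    rw [Fintype.card_fin, h1] at h2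
    have hm0 : (0 : ℝ) < m := by exact_mod_cast hm
    have h4 : (m : ℝ) * (Real.log Z - n * ∫ x, φ x ∂(μ : Measure X)) ≤
        n * labelEntropy (μ : Measure X) (itinerary f q 0 m) + 2 * m ^ 2 * Real.log k :=
      h2.trans (by gcongr)
    rw [← le_inv_mul_iff₀ hm0] at h4
    have h5 : (m : ℝ)⁻¹ * (n * labelEntropy (μ : Measure X) (itinerary f q 0 m) +
        2 * m ^ 2 * Real.log k) = (m : ℝ)⁻¹ *
        (n * labelEntropy (μ : Measure X) (itinerary f q 0 m)) + 2 * m * Real.log k := by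
      field_simp
    linarith

lemma exp_le_Qspan [Nonempty X] (f : X → X) {φ ψ : X → ℝ} {B m : ℝ} (hB0 : 0 ≤ B)
    (hB : ∀ x, |φ x| ≤ B) (hm : 0 < m) (hψ : ∀ x, m ≤ ψ x) {ε : ℝ} (hε : 0 < ε) {T : ℝ}
    (hT : 0 ≤ T) : Real.exp (-(B / m) * T) ≤ Qspan f φ ψ T ε := by
  classical
  choose F hF using exists_spanning f hε
  refine le_csInf ⟨_, F, fun n _ y _ => hF n y, rfl⟩ ?_
  rintro r ⟨G, hG, rfl⟩
  obtain ⟨x⟩ := ‹Nonempty X›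
  obtain ⟨n, hn⟩ := exists_mem_Xset hm hψ hT x
  have hnS := mem_STset hn
  obtain ⟨z, hz, -⟩ := hG n hnS x hn
  have hnT : n * m ≤ T := (le_birkhoff hψ x).trans hn.1
  rw [tsum_indicator_STset hm hψ]
  calc Real.exp (-(B / m) * T) ≤ Real.exp (birkhoff f φ n z) := by
        refine Real.exp_le_exp.2 (le_trans ?_ (abs_le.1 (abs_birkhoff_le (f := f) hB n z)).1)
        have : (n : ℝ) * B ≤ B / m * T := by
          rw [div_mul_eq_mul_div, le_div_iff₀ hm]
          nlinarith
        linarith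
    _ ≤ ∑ x ∈ G n, Real.exp (birkhoff f φ n x) :=
        Finset.single_le_sum (fun _ _ => (Real.exp_pos _).le) hz
    _ ≤ _ := Finset.single_le_sum (f := fun n => ∑ x ∈ G n, Real.exp (birkhoff f φ n x))
        (fun _ _ => Finset.sum_nonneg fun _ _ => (Real.exp_pos _).le) (by
          rw [Finset.mem_filter, Finset.mem_range]
          exact ⟨Nat.lt_succ_of_le (le_floor_of_mem_STset hm hψ hnS), hnS⟩)

lemma exists_separated_of_Qspan [Nonempty X] {f : X → X} {φ ψ : X → ℝ} (hφ : Continuous φ)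
    {m : ℝ} (hm : 0 < m) (hψ : ∀ x, m ≤ ψ x) {ε : ℝ} (hε : 0 < ε) {T : ℝ} (hT : 0 ≤ T) :
    ∃ (n : ℕ) (E : Finset X), E.Nonempty ∧ (E : Set X) ⊆ Xset f ψ T n ∧ IsSeparatedSet f n ε E ∧
      Real.log (Qspan f φ ψ T ε) - Real.log (T / m + 1) ≤
        Real.log (∑ x ∈ E, Real.exp (birkhoff f φ n x)) := by
  classical
  obtain ⟨B, hB0, hB⟩ := exists_abs_le hφ
  have hQ : 0 < Qspan f φ ψ T ε :=
    (Real.exp_pos _).trans_le (exp_le_Qspan f hB0.le hB hm hψ hε hT)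
  choose E hEX hEs hEsp using fun n => exists_separated_spanning f hε n (Xset f ψ T n)
  have hle : Qspan f φ ψ T ε ≤ ∑' n : ℕ, Set.indicator (STset f ψ T)
      (fun n => ∑ x ∈ E n, Real.exp (birkhoff f φ n x)) n :=
    csInf_le (bddBelow_Qspan f φ ψ T ε) ⟨E, fun n _ => hEsp n, rfl⟩
  rw [tsum_indicator_STset hm hψ] at hle
  set S := (Finset.range (⌊T / m⌋₊ + 1)).filter (· ∈ STset f ψ T)
  have hN : 0 < T / m + 1 := by positivity
  have hS : S.Nonempty := by
    rw [Finset.nonempty_iff_ne_empty]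
    intro h
    rw [h, Finset.sum_empty] at hle
    exact hle.not_gt hQ
  have hcard : (S.card : ℝ) ≤ T / m + 1 := by
    have h1 : S.card ≤ ⌊T / m⌋₊ + 1 := (Finset.card_filter_le _ _).trans (by simp)
    calc (S.card : ℝ) ≤ ((⌊T / m⌋₊ + 1 : ℕ) : ℝ) := by exact_mod_cast h1
      _ ≤ T / m + 1 := by
        push_cast
        gcongr
        exact Nat.floor_le (by positivity)
  obtain ⟨n, -, hn⟩ := Finset.exists_le_of_sum_le (s := S)
    (f := fun _ => Qspan f φ ψ T ε / (T / m + 1)) hS (le_trans (by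
      rw [Finset.sum_const, nsmul_eq_mul, mul_div_assoc', div_le_iff₀ hN, mul_comm]
      gcongr) hle)
  have hpos := div_pos hQ hN
  refine ⟨n, E n, ?_, hEX n, hEs n, ?_⟩
  · rw [Finset.nonempty_iff_ne_empty]
    intro h
    simp only [h, Finset.sum_empty] at hn
    exact hn.not_gt hpos
  · rw [← Real.log_div hQ.ne' hN.ne']
    exact Real.log_le_log hpos hn

end Existence

section EquilibriumStates

lemma birkhoff_comp_sub (f : X → X) (χ : X → ℝ) (n : ℕ) (x : X) :
    birkhoff f (fun y => χ (f y) - χ y) n x = χ (f^[n] x) - χ x := by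
  have := Finset.sum_range_sub (fun i => χ (f^[i] x)) n
  simpa only [birkhoff, Function.iterate_succ_apply', Function.iterate_zero, id] using this

variable [MetricSpace X] [CompactSpace X] [MeasurableSpace X] [BorelSpace X]

/-- Below the induced pressure there are invariant measures of large entropy. -/
lemma exists_le_ksEntropy [Nonempty X] {f : X → X} (hf : Continuous f) {φ ψ : X → ℝ}
    (hφ : Continuous φ) (hψ : Continuous ψ) (hpos : ∀ x, 0 < ψ x) {c : ℝ}
    (hc : c < inducedPressure f φ ψ) :
    ∃ μ : ProbabilityMeasure X, MeasurePreserving f (μ : Measure X) (μ : Measure X) ∧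
      ((c * ∫ x, ψ x ∂(μ : Measure X) - ∫ x, φ x ∂(μ : Measure X) : ℝ) : EReal) ≤
        ksEntropy (μ : Measure X) f := by
  obtain ⟨m₀, hm₀, hm₀ψ⟩ := exists_pos_le hψ hpos
  obtain ⟨B, hB0, hB⟩ := exists_abs_le hψ
  obtain ⟨ε, hc⟩ := lt_iSup_iff.1 hc
  obtain ⟨hε, hc⟩ := lt_iSup_iff.1 hc
  set G : Set ℝ := {T | B < T ∧ c * T < Real.log (Qspan f φ ψ T ε)} with hG
  have hfreq : ∃ᶠ T in atTop, T ∈ G := by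
    refine ((frequently_lt_of_lt_limsup (by isBoundedDefault) hc).and_eventually
      (eventually_gt_atTop B)).mono fun T hT => ⟨hT.2, ?_⟩
    have h1 := EReal.coe_lt_coe_iff.1 hT.1
    rw [lt_inv_mul_iff₀ (hB0.trans hT.2)] at h1
    linarith
  have key : ∀ T, ∃ (ν : ProbabilityMeasure X) (n : ℕ), T ∈ G → 0 < n ∧ T / B - 1 ≤ n ∧
      (∀ χ : X → ℝ, Continuous χ → ∀ a b, (∀ x, birkhoff f χ n x ∈ Icc a b) →
        n * ∫ x, χ x ∂(ν : Measure X) ∈ Icc a b) ∧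
      n * ∫ x, ψ x ∂(ν : Measure X) ∈ Icc (T - B) T ∧
      ∀ (k : ℕ) (q : X → Fin k), MeasurableFibers q → (∀ x y, q x = q y → dist x y ≤ ε) →
        ∀ m : ℕ, 0 < m → c * T - Real.log (T / m₀ + 1) ≤
          (m : ℝ)⁻¹ * (n * labelEntropy (ν : Measure X) (itinerary f q 0 m)) +
            n * ∫ x, φ x ∂(ν : Measure X) + 2 * m * Real.log k := by
    intro T
    by_cases hT : T ∈ G
    · have hT0 : 0 < T := hB0.trans hT.1
      obtain ⟨n, E, hEne, hEX, hEs, hEQ⟩ :=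
        exists_separated_of_Qspan (f := f) hφ hm₀ hm₀ψ hε hT0.le
      have hTn : T < (n + 1) * B := by
        obtain ⟨x, hx⟩ := hEne
        have h1 := (abs_le.1 (abs_birkhoff_le (f := f) hB (n + 1) x)).2
        push_cast at h1
        exact (hEX hx).2.trans_le h1
      have hn : 0 < n := by
        refine Nat.pos_of_ne_zero fun h0 => ?_
        rw [h0] at hTn
        norm_num at hTn
        exact hT.1.not_gt hTn
      obtain ⟨ν, h1, h2⟩ := exists_empirical hf hφ hn hEne hEs hε
      refine ⟨ν, n, fun _ => ⟨hn, ?_, fun χ hχ a b h => h1 χ hχ a b fun x _ => h x,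
        h1 ψ hψ _ _ fun x hx => ?_, fun k q hq hqd m hm => ?_⟩⟩
      · rw [sub_le_iff_le_add, div_le_iff₀ hB0]
        exact hTn.le
      · have h3 := (hEX hx).2
        rw [birkhoff, Finset.sum_range_succ] at h3
        have h4 := (abs_le.1 (hB (f^[n] x))).2
        refine ⟨?_, (hEX hx).1⟩
        rw [birkhoff]
        linarith
      · have h3 := h2 k q hq hqd m hm
        have h4 := hT.2
        linarith
    · exact ⟨⟨Measure.dirac (Classical.arbitrary X), inferInstance⟩, 0, fun h => absurd h hT⟩
  choose ν n hν using key
  have hNeBot : (atTop ⊓ 𝓟 G : Filter ℝ).NeBot := frequently_mem_iff_neBot.1 hfreq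
  set u := Ultrafilter.of (atTop ⊓ 𝓟 G : Filter ℝ)
  have hu : (u : Filter ℝ) ≤ atTop ⊓ 𝓟 G := Ultrafilter.of_le _
  have hutop : Tendsto (fun T : ℝ => T) (u : Filter ℝ) atTop := hu.trans inf_le_left
  have huG : ∀ᶠ T in (u : Filter ℝ), T ∈ G := (hu.trans inf_le_right) (mem_principal_self G)
  obtain ⟨μ, -, hμ⟩ := isCompact_univ.ultrafilter_le_nhds (u.map ν) (by simp)
  have hμ' : Tendsto ν (u : Filter ℝ) (𝓝 μ) := hμ
  have hden : Tendsto (fun T : ℝ => T / B - 1) (u : Filter ℝ) atTop :=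
    tendsto_atTop_add_const_right _ _ (hutop.atTop_div_const hB0)
  have hdpos : ∀ T ∈ G, 0 < T / B - 1 := fun T hT => by
    rw [sub_pos, lt_div_iff₀ hB0, one_mul]
    exact hT.1
  have hμinv : MeasurePreserving f (μ : Measure X) (μ : Measure X) := by
    refine measurePreserving_of_tendsto hf hμ' fun χ hχ => ?_
    obtain ⟨A, hA0, hA⟩ := exists_abs_le hχ
    refine squeeze_zero_norm' (a := fun T : ℝ => 2 * A / (T / B - 1)) ?_
      (tendsto_const_nhds.div_atTop hden)
    filter_upwards [huG] with T hT
    obtain ⟨hn, hTn, h1, -⟩ := hν T hT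
    have h2 := h1 (fun y => χ (f y) - χ y) ((hχ.comp hf).sub hχ) (-(2 * A)) (2 * A) (by
      intro x
      rw [birkhoff_comp_sub]
      have h3 := abs_le.1 (hA (f^[n T] x))
      have h4 := abs_le.1 (hA x)
      constructor <;> linarith)
    have h3 : ∫ x, (χ (f x) - χ x) ∂(ν T : Measure X) =
        ∫ x, χ (f x) ∂(ν T : Measure X) - ∫ x, χ x ∂(ν T : Measure X) :=
      integral_sub (integrable_of_continuous (hχ.comp hf) _) (integrable_of_continuous hχ _)
    rw [h3] at h2
    have hn0 : (0 : ℝ) < n T := by exact_mod_cast hn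
    rw [Real.norm_eq_abs, le_div_iff₀ (hdpos T hT)]
    refine (mul_le_mul_of_nonneg_left hTn (abs_nonneg _)).trans ?_
    rw [mul_comm, ← abs_of_pos hn0, ← abs_mul]
    exact abs_le.2 h2
  obtain ⟨k, q, hq, hqd, hqν⟩ := exists_fine_label (μ : Measure X) hε
  refine ⟨μ, hμinv, le_ksEntropy_of_tendsto hf hφ hψ hμ' hμinv hq hqν c
    (e := fun m T => (2 * m * Real.log k + |c| * B) / (T / B - 1) +
      Real.log (T / m₀ + 1) / (T / B - 1)) (fun m => ?_) fun m hm => ?_⟩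
  · rw [← add_zero (0 : ℝ)]
    refine (tendsto_const_nhds.div_atTop hden).add ?_
    have h1 := (Real.tendsto_pow_log_div_mul_add_atTop (m₀ / B) (-(m₀ / B) - 1) 1
      (by positivity)).comp (tendsto_atTop_add_const_right _ 1 (hutop.atTop_div_const hm₀))
    refine h1.congr fun T => ?_
    simp only [Function.comp_apply, pow_one]
    congr 1
    field_simp
    ring
  · filter_upwards [huG] with T hT
    obtain ⟨hn, hTn, -, h1, h2⟩ := hν T hT
    have hT0 : 0 < T := hB0.trans hT.1
    have hn0 : (0 : ℝ) < n T := by exact_mod_cast hn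
    have hN : 0 ≤ 2 * m * Real.log k + |c| * B + Real.log (T / m₀ + 1) := by
      have h3 : 0 ≤ Real.log k := Real.log_natCast_nonneg _
      have h4 : 0 ≤ Real.log (T / m₀ + 1) := by
        refine Real.log_nonneg ?_
        have : 0 < T / m₀ := by positivity
        linarith
      positivity
    have h3 := h2 k q hq hqd m hm
    have h4 : c * (n T * ∫ x, ψ x ∂(ν T : Measure X)) ≤ c * T + |c| * B := by
      have h5 : |n T * ∫ x, ψ x ∂(ν T : Measure X) - T| ≤ B :=
        abs_le.2 ⟨by linarith [h1.1], by linarith [h1.2]⟩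
      have h6 := (le_abs_self (c * (n T * ∫ x, ψ x ∂(ν T : Measure X) - T))).trans
        ((abs_mul _ _).trans_le (mul_le_mul_of_nonneg_left h5 (abs_nonneg c)))
      linarith
    rw [← add_div]
    have h5 : (2 * m * Real.log k + |c| * B + Real.log (T / m₀ + 1)) / n T ≤
        (2 * m * Real.log k + |c| * B + Real.log (T / m₀ + 1)) / (T / B - 1) :=
      div_le_div_of_nonneg_left hN (hdpos T hT) hTn
    refine le_trans ?_ (add_le_add_right h5 _)
    refine le_of_mul_le_mul_left ?_ hn0
    rw [mul_add, mul_add, mul_div_cancel₀ _ hn0.ne']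
    linarith

end EquilibriumStates

section EquilibriumMeasures

variable [MetricSpace X] [CompactSpace X] [MeasurableSpace X] [BorelSpace X]

lemma inducedPressure_ne_bot [Nonempty X] (f : X → X) {φ ψ : X → ℝ} (hφ : Continuous φ)
    (hψ : Continuous ψ) (hpos : ∀ x, 0 < ψ x) : inducedPressure f φ ψ ≠ ⊥ := by
  obtain ⟨m, hm, hmψ⟩ := exists_pos_le hψ hpos
  obtain ⟨B, hB0, hB⟩ := exists_abs_le hφ
  have h : ((-(B / m) : ℝ) : EReal) ≤ inducedPressure f φ ψ := by
    refine le_iSup₂_of_le 1 one_pos (le_limsup_of_frequently_le' ?_)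
    refine ((eventually_gt_atTop (0 : ℝ)).mono fun T hT => ?_).frequently
    have hQ := exp_le_Qspan f hB0.le hB hm hmψ one_pos hT.le
    rw [EReal.coe_le_coe_iff, le_inv_mul_iff₀ hT, mul_comm,
      Real.le_log_iff_exp_le ((Real.exp_pos _).trans_le hQ)]
    exact hQ
  exact ne_bot_of_le_ne_bot (EReal.coe_ne_bot _) h

variable {f : X → X} {ε : ℝ}

lemma exists_ksEntropy_le (hε : 0 < ε)
    (hexp : ∀ x y : X, (∀ n : ℕ, dist (f^[n] x) (f^[n] y) < ε) → x = y) (hf : Continuous f) :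
    ∃ C : ℝ, ∀ μ : ProbabilityMeasure X, MeasurePreserving f (μ : Measure X) (μ : Measure X) →
      ksEntropy (μ : Measure X) f ≤ C := by
  obtain ⟨k, q, hq, hqd, -⟩ := exists_fine_label (0 : Measure X) (half_pos hε)
  refine ⟨Real.log (Fintype.card (Fin 1 → Fin k)), fun μ hμ =>
    (ksEntropy_le_of_expansive hexp hf (half_lt_self hε) hμ hq hqd one_pos).trans
      (EReal.coe_le_coe_iff.2 ?_)⟩
  rw [Nat.cast_one, inv_one, one_mul]
  exact labelEntropy_le_log_card _ (hq.itinerary hf.measurable 0 1)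

lemma integral_pos_of_continuous {ψ : X → ℝ} (hψ : Continuous ψ) (hpos : ∀ x, 0 < ψ x)
    (μ : Measure X) [IsProbabilityMeasure μ] : 0 < ∫ x, ψ x ∂μ := by
  obtain ⟨m, hm, hmψ⟩ := exists_pos_le hψ hpos
  have := integral_mono (integrable_const m) (integrable_of_continuous hψ μ) hmψ
  simp only [integral_const, probReal_univ, one_smul] at this
  exact hm.trans_le this

lemma inducedPressure_ne_top [Nonempty X] (hε : 0 < ε)
    (hexp : ∀ x y : X, (∀ n : ℕ, dist (f^[n] x) (f^[n] y) < ε) → x = y) (hf : Continuous f)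
    {φ ψ : X → ℝ} (hφ : Continuous φ) (hψ : Continuous ψ) (hpos : ∀ x, 0 < ψ x) :
    inducedPressure f φ ψ ≠ ⊤ := by
  intro htop
  obtain ⟨C, hC⟩ := exists_ksEntropy_le hε hexp hf
  obtain ⟨m, hm, hmψ⟩ := exists_pos_le hψ hpos
  obtain ⟨B, hB0, hB⟩ := exists_abs_le hφ
  obtain ⟨μ, hμ, hle⟩ := exists_le_ksEntropy hf hφ hψ hpos (c := (|C| + B + 1) / m)
    (htop ▸ EReal.coe_lt_top _)
  have h1 := EReal.coe_le_coe_iff.1 (hle.trans (hC μ hμ))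
  have h2 := integral_mono (integrable_const m) (integrable_of_continuous hψ (μ : Measure X)) hmψ
  have h3 := integral_mono (integrable_of_continuous hφ (μ : Measure X)) (integrable_const B)
    fun x => (abs_le.1 (hB x)).2
  simp only [integral_const, probReal_univ, one_smul] at h2 h3
  have h4 : (|C| + B + 1) / m * m ≤ (|C| + B + 1) / m * ∫ x, ψ x ∂(μ : Measure X) := by gcongr
  rw [div_mul_cancel₀ _ hm.ne'] at h4
  linarith [le_abs_self C]

/-- Equilibrium measures are the invariant measures attaining the supremum in the variational
principle. -/
lemma isEquilibriumMeasure_iff (hε : 0 < ε)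
    (hexp : ∀ x y : X, (∀ n : ℕ, dist (f^[n] x) (f^[n] y) < ε) → x = y) (hf : Continuous f)
    {φ ψ : X → ℝ} (hφ : Continuous φ) (hψ : Continuous ψ) (hpos : ∀ x, 0 < ψ x) {p : ℝ}
    (hp : inducedPressure f φ ψ = p) {μ : ProbabilityMeasure X}
    (hμ : MeasurePreserving f (μ : Measure X) (μ : Measure X)) :
    IsEquilibriumMeasure f φ ψ (μ : Measure X) ↔
      ((p * ∫ x, ψ x ∂(μ : Measure X) - ∫ x, φ x ∂(μ : Measure X) : ℝ) : EReal) ≤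
        ksEntropy (μ : Measure X) f := by
  obtain ⟨C, hC⟩ := exists_ksEntropy_le hε hexp hf
  have hb := integral_pos_of_continuous hψ hpos (μ : Measure X)
  have hle : ∀ β : ℝ, p < β → ksEntropy (μ : Measure X) f ≤
      (β * ∫ x, ψ x ∂(μ : Measure X) - ∫ x, φ x ∂(μ : Measure X) : ℝ) := fun β hβ =>
    ksEntropy_le_of_inducedPressure_lt hf hφ hψ hpos (hp ▸ EReal.coe_lt_coe_iff.2 hβ) hμ
  have hnt : ksEntropy (μ : Measure X) f ≠ ⊤ := ne_top_of_le_ne_top (EReal.coe_ne_top C) (hC μ hμ)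
  have hnb : ksEntropy (μ : Measure X) f ≠ ⊥ :=
    ne_bot_of_le_ne_bot EReal.zero_ne_bot (ksEntropy_nonneg (μ : Measure X) f)
  rw [IsEquilibriumMeasure, hp]
  lift ksEntropy (μ : Measure X) f to ℝ using ⟨hnt, hnb⟩ with h
  have hle' : h + ∫ x, φ x ∂(μ : Measure X) ≤ p * ∫ x, ψ x ∂(μ : Measure X) := by
    rw [← div_le_iff₀ hb]
    refine le_of_forall_gt_imp_ge_of_dense fun β hβ => ?_
    rw [div_le_iff₀ hb]
    linarith [EReal.coe_le_coe_iff.1 (hle β hβ)]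
  rw [EReal.coe_le_coe_iff, ← EReal.coe_add, ← EReal.coe_mul, EReal.coe_eq_coe_iff,
    ← div_eq_mul_inv, div_eq_iff hb.ne']
  constructor
  · intro h
    linarith
  · intro h
    linarith

end EquilibriumMeasures

/-- for a positively expansive map, the set of equilibrium measures for
`ψ` and `φ` is non-empty and compact in the weak-* topology. -/
theorem stmt14 [MetricSpace X] [CompactSpace X] [Nonempty X]
    [MeasurableSpace X] [BorelSpace X]
    (f : X → X) (φ ψ : X → ℝ) (hf : Continuous f) (hφ : Continuous φ) (hψ : Continuous ψ)
    (hpos : ∀ x, 0 < ψ x)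
    (hexp : ∃ ε : ℝ, 0 < ε ∧ ∀ x y : X,
      (∀ n : ℕ, dist (f^[n] x) (f^[n] y) < ε) → x = y) :
    letI S : Set (ProbabilityMeasure X) :=
      {μ | MeasurePreserving f (μ : Measure X) (μ : Measure X) ∧
        IsEquilibriumMeasure f φ ψ (μ : Measure X)}
    S.Nonempty ∧ IsCompact S := by
  obtain ⟨ε, hε, hexp⟩ := hexp
  obtain ⟨p, hp⟩ : ∃ p : ℝ, inducedPressure f φ ψ = p :=
    ⟨_, (EReal.coe_toReal (inducedPressure_ne_top hε hexp hf hφ hψ hpos)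
      (inducedPressure_ne_bot f hφ hψ hpos)).symm⟩
  let K : ℝ → Set (ProbabilityMeasure X) := fun c =>
    {μ | MeasurePreserving f (μ : Measure X) (μ : Measure X) ∧
      ((c * ∫ x, ψ x ∂(μ : Measure X) - ∫ x, φ x ∂(μ : Measure X) : ℝ) : EReal) ≤
        ksEntropy (μ : Measure X) f}
  have hK : ∀ c, IsClosed (K c) := isClosed_setOf_le_ksEntropy hε hexp hf hφ hψ
  have hS : {μ : ProbabilityMeasure X | MeasurePreserving f (μ : Measure X) (μ : Measure X) ∧
      IsEquilibriumMeasure f φ ψ (μ : Measure X)} = K p := by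
    ext μ
    exact and_congr_right (isEquilibriumMeasure_iff hε hexp hf hφ hψ hpos hp)
  have hmono : ∀ c d, c ≤ d → K d ⊆ K c := fun c d hcd μ hμ => by
    refine ⟨hμ.1, le_trans (EReal.coe_le_coe_iff.2 ?_) hμ.2⟩
    have := integral_pos_of_continuous hψ hpos (μ : Measure X)
    gcongr
  obtain ⟨c, hcm, hcp, hc⟩ := exists_seq_strictMono_tendsto p
  obtain ⟨μ, hμ⟩ := IsCompact.nonempty_iInter_of_sequence_nonempty_isCompact_isClosed
    (fun j => K (c j)) (fun j => hmono _ _ (hcm.monotone j.le_succ))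
    (fun j => exists_le_ksEntropy hf hφ hψ hpos (hp ▸ EReal.coe_lt_coe_iff.2 (hcp j)))
    (hK _).isCompact fun j => hK _
  rw [mem_iInter] at hμ
  change Set.Nonempty _ ∧ IsCompact _
  rw [hS]
  refine ⟨⟨μ, (hμ 0).1, ?_⟩, (hK p).isCompact⟩
  refine le_of_tendsto' ((continuous_coe_real_ereal.tendsto _).comp
    ((hc.mul_const _).sub_const _)) fun j => (hμ j).2
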